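/- arXiv:1910.13384 — 2 statements merged into one kernel-verified Lean document; each statement's English description precedes it below -/
import Mathlib

section
/- Assume the sieve setup with sup_d |λ_d| ≤ (log X)^{k/2}. Then there is an absolute constant C such that ∑_{X ≤ n ≤ 2X} w_n² ≤ C·X·(log X)^{16 k²}. -/
/-- `⟨P3⟩`: positive integers all of whose prime factors are `≡ 3 (mod 4)` (contains 1). -/
def InP3 (n : ℕ) : Prop := ∀ p : ℕ, p.Prime → p ∣ n → p % 4 = 3

/-!
Expanding the fourth power of `∑ d ∣ F(n), λ_d` turns the second moment into a sum over quadruples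
of moduli. At most `16 ^ ω(m)` quadruples have least common multiple `m`, and for squarefree `m` at
most `k ^ ω(m) * (x / m + 1)` of the integers `n` satisfy `m ∣ F(n)`, where `k` bounds the degree of
`F`. As `m ≤ x`, everything reduces to bounding `∑ (16 k) ^ ω(m) / m` over the squarefree `m ≤ x` in
`⟨P3⟩`. Rankin's trick with `s = 1 + 1 / log x` majorises this sum by the `16 k`-th power of
`∏ (1 + p ^ (-s))`, the product being over the primes `p ≡ 3 (mod 4)`. These are half of the primes:
comparing the Euler products of `ζ(s)` and `L(s, χ₄)` factor by factor bounds the square of the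
product by a multiple of `ζ(s)`, so the product is `O((log x) ^ (1 / 2))`. Its `16 k`-th power
contributes `(log x) ^ (8 k)`, the factor `|λ_d| ^ 4` contributes `(log x) ^ (2 k)`, and a spare
`(log x) ^ (4 k)` absorbs the implied constant. Using all primes would already give
`(log x) ^ (16 k + 2 k)`, which is too large when `k = 1`.
-/

open Filter Finset Polynomial Real Topology

section EulerProduct

variable {s : ℝ}

lemma summable_norm_dirichlet_mul_rpow_neg {N : ℕ} (χ : DirichletCharacter ℝ N) (hs : 1 < s) :
    Summable fun n : ℕ ↦ ‖χ n * (n : ℝ) ^ (-s)‖ := by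
  refine (Real.summable_nat_rpow.2 (neg_lt_neg hs)).of_nonneg_of_le (fun n ↦ norm_nonneg _)
    fun n ↦ ?_
  have hn : 0 ≤ (n : ℝ) ^ (-s) := by positivity
  rw [norm_mul, Real.norm_of_nonneg hn]
  exact mul_le_of_le_one_left hn (χ.norm_le_one n)

lemma tendsto_prod_primesBelow_dirichlet {N : ℕ} (χ : DirichletCharacter ℝ N) (hs : 1 < s) :
    Tendsto (fun n : ℕ ↦ ∏ p ∈ n.primesBelow, (1 - χ p * (p : ℝ) ^ (-s))⁻¹) atTop
      (𝓝 (∑' n : ℕ, χ n * (n : ℝ) ^ (-s))) := by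
  let f : ℕ →*₀ ℝ :=
    { toFun := fun n ↦ χ n * (n : ℝ) ^ (-s)
      map_zero' := by simp [Real.zero_rpow (show -s ≠ 0 by linarith)]
      map_one' := by simp
      map_mul' := fun m n ↦ by
        push_cast
        rw [map_mul, Real.mul_rpow m.cast_nonneg n.cast_nonneg, mul_mul_mul_comm] }
  exact EulerProduct.eulerProduct_completely_multiplicative (f := f)
    (summable_norm_dirichlet_mul_rpow_neg χ hs)

lemma tendsto_prod_primesBelow_zeta (hs : 1 < s) :
    Tendsto (fun n : ℕ ↦ ∏ p ∈ n.primesBelow, (1 - (p : ℝ) ^ (-s))⁻¹) atTop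
      (𝓝 (∑' n : ℕ, (n : ℝ) ^ (-s))) := by
  have h_one (n : ℕ) : (1 : DirichletCharacter ℝ 1) n = 1 :=
    MulChar.one_apply (isUnit_of_subsingleton _)
  simpa only [h_one, one_mul] using
    tendsto_prod_primesBelow_dirichlet (1 : DirichletCharacter ℝ 1) hs

lemma tendsto_prod_primesBelow_χ₄ (hs : 1 < s) :
    Tendsto (fun n : ℕ ↦ ∏ p ∈ n.primesBelow, (1 - (ZMod.χ₄ p : ℝ) * (p : ℝ) ^ (-s))⁻¹) atTop
      (𝓝 (∑' n : ℕ, (ZMod.χ₄ n : ℝ) * (n : ℝ) ^ (-s))) :=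
  tendsto_prod_primesBelow_dirichlet (ZMod.χ₄.ringHomComp (Int.castRingHom ℝ)) hs

lemma tsum_nat_rpow_neg_le (hs : 1 < s) : ∑' n : ℕ, (n : ℝ) ^ (-s) ≤ 1 + 1 / (s - 1) := by
  have h_shift : ∑' n : ℕ, (n : ℝ) ^ (-s) = ∑' n : ℕ, 1 / ((n : ℝ) + 1) ^ s := by
    rw [(Real.summable_nat_rpow.2 (neg_lt_neg hs)).tsum_eq_zero_add]
    simp [Real.zero_rpow (show -s ≠ 0 by linarith), Real.rpow_neg, add_nonneg]
  have h_term : 0 ≤ s * ZetaAsymptotics.termTSum s :=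
    mul_nonneg (by linarith) (tsum_nonneg fun n ↦ ZetaAsymptotics.term_nonneg _ _)
  linarith [ZetaAsymptotics.zeta_limit_aux1 hs]

lemma two_thirds_le_tsum_χ₄ (hs : 1 < s) :
    2 / 3 ≤ ∑' n : ℕ, (ZMod.χ₄ n : ℝ) * (n : ℝ) ^ (-s) := by
  set f : ℕ → ℝ := fun n ↦ (ZMod.χ₄ n : ℝ) * (n : ℝ) ^ (-s)
  have hf : Summable f := (summable_norm_dirichlet_mul_rpow_neg
    (ZMod.χ₄.ringHomComp (Int.castRingHom ℝ)) hs).of_norm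
  have h_even (n : ℕ) : f (2 * n) = 0 := by
    simp only [f]
    rw [ZMod.χ₄_nat_eq_if_mod_four, if_pos (by omega), Int.cast_zero, zero_mul]
  have h_odd (n : ℕ) : f (2 * n + 1) = (-1) ^ n * (2 * n + 1 : ℝ) ^ (-s) := by
    simp only [f]
    rw [ZMod.χ₄_eq_neg_one_pow (by omega), show (2 * n + 1) / 2 = n by omega]
    push_cast
    rfl
  have hf_odd : Summable fun n ↦ f (2 * n + 1) :=
    hf.comp_injective (i := fun n ↦ 2 * n + 1) fun m n h ↦ by simpa using h
  have h_tsum : ∑' n, f n = ∑' n : ℕ, (-1) ^ n * (2 * n + 1 : ℝ) ^ (-s) := by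
    rw [← tsum_even_add_odd (by simp [h_even, summable_zero]) hf_odd]
    simp [h_even, h_odd]
  have h_anti : Antitone fun n : ℕ ↦ (2 * n + 1 : ℝ) ^ (-s) := fun m n hmn ↦
    Real.rpow_le_rpow_of_nonpos (by positivity) (by gcongr) (by linarith)
  have h_three : (3 : ℝ) ^ (-s) ≤ 3⁻¹ := by
    rw [← Real.rpow_neg_one]
    exact Real.rpow_le_rpow_of_exponent_le (by norm_num) (by linarith)
  have h_partial := h_anti.alternating_series_le_tendsto
    ((hf_odd.congr h_odd).hasSum.tendsto_sum_nat) 1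
  norm_num [sum_range_succ] at h_partial
  rw [h_tsum]
  linarith

lemma abs_χ₄_mul_le (n : ℕ) {x : ℝ} (hx : 0 ≤ x) : |(ZMod.χ₄ n : ℝ) * x| ≤ x := by
  rcases ZMod.isQuadratic_χ₄ n with h | h | h <;> simp [h, abs_of_nonneg hx, hx]

lemma sq_mul_inv_one_sub_χ₄_mul_le (p : ℕ) {x : ℝ} (hx₀ : 0 ≤ x) (hx₁ : x < 1) :
    (if p % 4 = 3 then 1 + x else 1) ^ 2 * (1 - (ZMod.χ₄ p : ℝ) * x)⁻¹ ≤ (1 - x)⁻¹ := by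
  have h_pos : 0 < 1 - x := by linarith
  split_ifs with hp
  · have h_pos' : 0 < 1 + x := by linarith
    calc (1 + x) ^ 2 * (1 - (ZMod.χ₄ p : ℝ) * x)⁻¹
        = (1 + x) ^ 2 * (1 + x)⁻¹ := by simp [ZMod.χ₄_nat_three_mod_four hp]
      _ = 1 + x := by field_simp
      _ ≤ (1 - x)⁻¹ := by
        rw [le_inv_comm₀ h_pos' h_pos, ← one_div, le_div_iff₀ h_pos']
        nlinarith
  · rw [one_pow, one_mul]
    exact inv_anti₀ h_pos (by linarith [(abs_le.1 (abs_χ₄_mul_le p hx₀)).2])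

lemma sq_prod_one_add_mul_tsum_χ₄_le (hs : 1 < s) (M : ℕ) :
    (∏ p ∈ M.primesBelow with p % 4 = 3, (1 + (p : ℝ) ^ (-s))) ^ 2 *
      ∑' n : ℕ, (ZMod.χ₄ n : ℝ) * (n : ℝ) ^ (-s) ≤ ∑' n : ℕ, (n : ℝ) ^ (-s) := by
  refine le_of_tendsto_of_tendsto ((tendsto_prod_primesBelow_χ₄ hs).const_mul _)
    (tendsto_prod_primesBelow_zeta hs) ?_
  filter_upwards [eventually_ge_atTop M] with N hMN
  have h_nonneg (p : ℕ) : 0 ≤ (p : ℝ) ^ (-s) := by positivity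
  have h_lt_one {p : ℕ} (hp : p ∈ N.primesBelow) : (p : ℝ) ^ (-s) < 1 :=
    Real.rpow_lt_one_of_one_lt_of_neg
      (mod_cast (Nat.prime_of_mem_primesBelow hp).one_lt) (by linarith)
  have h_factor {p : ℕ} (hp : p ∈ N.primesBelow) :
      0 ≤ (1 - (ZMod.χ₄ p : ℝ) * (p : ℝ) ^ (-s))⁻¹ :=
    inv_nonneg.2 (by linarith [(abs_le.1 (abs_χ₄_mul_le p (h_nonneg p))).2, h_lt_one hp])
  have h_mono : ∏ p ∈ M.primesBelow with p % 4 = 3, (1 + (p : ℝ) ^ (-s)) ≤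
      ∏ p ∈ N.primesBelow with p % 4 = 3, (1 + (p : ℝ) ^ (-s)) := by
    refine prod_le_prod_of_subset_of_one_le (filter_subset_filter _ ?_)
      (fun p _ ↦ by linarith [h_nonneg p]) fun p _ _ ↦ by linarith [h_nonneg p]
    exact filter_subset_filter _ (range_subset_range.2 hMN)
  calc (∏ p ∈ M.primesBelow with p % 4 = 3, (1 + (p : ℝ) ^ (-s))) ^ 2 *
        ∏ p ∈ N.primesBelow, (1 - (ZMod.χ₄ p : ℝ) * (p : ℝ) ^ (-s))⁻¹
      ≤ (∏ p ∈ N.primesBelow with p % 4 = 3, (1 + (p : ℝ) ^ (-s))) ^ 2 *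
        ∏ p ∈ N.primesBelow, (1 - (ZMod.χ₄ p : ℝ) * (p : ℝ) ^ (-s))⁻¹ := by
        gcongr
        exact prod_nonneg fun p hp ↦ h_factor hp
    _ = ∏ p ∈ N.primesBelow, (if p % 4 = 3 then 1 + (p : ℝ) ^ (-s) else 1) ^ 2 *
        (1 - (ZMod.χ₄ p : ℝ) * (p : ℝ) ^ (-s))⁻¹ := by
        rw [prod_mul_distrib, prod_pow, prod_filter]
    _ ≤ ∏ p ∈ N.primesBelow, (1 - (p : ℝ) ^ (-s))⁻¹ :=
        prod_le_prod (fun p hp ↦ mul_nonneg (sq_nonneg _) (h_factor hp))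
          fun p hp ↦ sq_mul_inv_one_sub_χ₄_mul_le p (h_nonneg p) (h_lt_one hp)

lemma prod_one_add_rpow_neg_le (hs : 1 < s) (M : ℕ) :
    ∏ p ∈ M.primesBelow with p % 4 = 3, (1 + (p : ℝ) ^ (-s)) ≤ √(3 / 2 * (1 + 1 / (s - 1))) := by
  refine Real.le_sqrt_of_sq_le ?_
  nlinarith [sq_prod_one_add_mul_tsum_χ₄_le hs M, two_thirds_le_tsum_χ₄ hs,
    tsum_nat_rpow_neg_le hs, sq_nonneg (∏ p ∈ M.primesBelow with p % 4 = 3, (1 + (p : ℝ) ^ (-s)))]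

end EulerProduct

section RankinTrick

lemma inv_le_exp_one_mul_rpow {x y : ℝ} (hx : 0 < x) (hxy : x ≤ y) (hy : 1 < y) :
    x⁻¹ ≤ exp 1 * x ^ (-(1 + 1 / log y)) := by
  have h_rpow : x ^ (1 / log y) ≤ exp 1 :=
    calc x ^ (1 / log y) ≤ y ^ (1 / log y) :=
          Real.rpow_le_rpow hx.le hxy (one_div_nonneg.2 (Real.log_pos hy).le)
      _ = exp 1 := by
          rw [Real.rpow_def_of_pos (one_pos.trans hy), mul_one_div_cancel (Real.log_pos hy).ne']
  rw [Real.rpow_neg hx.le, Real.rpow_add hx, Real.rpow_one, mul_inv_rev, ← mul_assoc,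
    ← div_eq_mul_inv (exp 1)]
  exact le_mul_of_one_le_left (by positivity) ((one_le_div (by positivity)).2 h_rpow)

lemma sum_prod_primeFactors_le_prod_one_add {g : ℕ → ℝ} (hg : ∀ p, 0 ≤ g p) {T Q : Finset ℕ}
    (hT : ∀ n ∈ T, Squarefree n ∧ n.primeFactors ⊆ Q) :
    ∑ n ∈ T, ∏ p ∈ n.primeFactors, g p ≤ ∏ p ∈ Q, (1 + g p) := by
  have h_inj : Set.InjOn Nat.primeFactors (T : Set ℕ) := fun m hm n hn h ↦ by
    rw [← Nat.prod_primeFactors_of_squarefree (hT m hm).1,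
      ← Nat.prod_primeFactors_of_squarefree (hT n hn).1, h]
  rw [prod_one_add, ← sum_image (f := fun t ↦ ∏ p ∈ t, g p) h_inj]
  refine sum_le_sum_of_subset_of_nonneg ?_ fun t _ _ ↦ prod_nonneg fun p _ ↦ hg p
  exact image_subset_iff.2 fun n hn ↦ mem_powerset.2 (hT n hn).2

lemma InP3.primeFactors_subset {n : ℕ} (hn : InP3 n) {M : ℕ} (hnM : n < M) :
    n.primeFactors ⊆ {p ∈ M.primesBelow | p % 4 = 3} := fun p hp ↦ by
  have hp_prime := Nat.prime_of_mem_primeFactors hp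
  have hpM : p < M := (Nat.le_of_mem_primeFactors hp).trans_lt hnM
  exact mem_filter.2 ⟨Nat.mem_primesBelow.2 ⟨hpM, hp_prime⟩,
    hn p hp_prime (Nat.dvd_of_mem_primeFactors hp)⟩

lemma prod_primeFactors_mul_rpow {n : ℕ} (hn : Squarefree n) (z s : ℝ) :
    ∏ p ∈ n.primeFactors, z * (p : ℝ) ^ s = z ^ #n.primeFactors * (n : ℝ) ^ s := by
  rw [prod_mul_distrib, prod_const, Real.finsetProd_rpow _ _ fun p _ ↦ p.cast_nonneg,
    ← Nat.cast_prod, Nat.prod_primeFactors_of_squarefree hn]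

lemma sum_pow_card_primeFactors_div_le {x : ℝ} (hx : 1 < x) (z : ℕ) {T : Finset ℕ}
    (hT : ∀ n ∈ T, Squarefree n ∧ InP3 n ∧ (n : ℝ) ≤ x) :
    ∑ n ∈ T, (z : ℝ) ^ #n.primeFactors / n ≤ exp 1 * √(3 / 2 * (1 + log x)) ^ z := by
  set s := 1 + 1 / log x with hs
  have hs₁ : 1 < s := lt_add_of_pos_right _ (one_div_pos.2 (Real.log_pos hx))
  set Q := {p ∈ (⌊x⌋₊ + 1).primesBelow | p % 4 = 3}
  have h_nonneg (p : ℕ) : 0 ≤ (p : ℝ) ^ (-s) := by positivity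
  have hTQ (n) (hn : n ∈ T) : Squarefree n ∧ n.primeFactors ⊆ Q := by
    obtain ⟨hn_sqf, hn_P3, hnx⟩ := hT n hn
    exact ⟨hn_sqf, hn_P3.primeFactors_subset (Nat.lt_succ_of_le (Nat.le_floor hnx))⟩
  have h_rankin (n) (hn : n ∈ T) :
      (z : ℝ) ^ #n.primeFactors / n ≤ exp 1 * ∏ p ∈ n.primeFactors, z * (p : ℝ) ^ (-s) := by
    have hn₀ : (0 : ℝ) < n := mod_cast Nat.pos_of_ne_zero (hT n hn).1.ne_zero
    rw [prod_primeFactors_mul_rpow (hT n hn).1, mul_left_comm, div_eq_mul_inv]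
    gcongr
    exact inv_le_exp_one_mul_rpow hn₀ (hT n hn).2.2 hx
  calc ∑ n ∈ T, (z : ℝ) ^ #n.primeFactors / n
      ≤ exp 1 * ∑ n ∈ T, ∏ p ∈ n.primeFactors, z * (p : ℝ) ^ (-s) := by
        rw [mul_sum]
        exact sum_le_sum h_rankin
    _ ≤ exp 1 * ∏ p ∈ Q, (1 + z * (p : ℝ) ^ (-s)) := by
        gcongr
        exact sum_prod_primeFactors_le_prod_one_add (fun p ↦ by positivity) hTQ
    _ ≤ exp 1 * (∏ p ∈ Q, (1 + (p : ℝ) ^ (-s))) ^ z := by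
        rw [← prod_pow]
        gcongr with p
        exact one_add_mul_le_pow (by linarith [h_nonneg p]) z
    _ ≤ exp 1 * √(3 / 2 * (1 + log x)) ^ z := by
        have h_euler := prod_one_add_rpow_neg_le hs₁ (⌊x⌋₊ + 1)
        rw [hs, add_sub_cancel_left, one_div_one_div] at h_euler
        gcongr

end RankinTrick

section Roots

/-- The roots of `F` modulo `m`, represented in `[0, m)`. -/
noncomputable def rootsMod (F : ℤ[X]) (m : ℕ) : Finset ℤ := {r ∈ Ico 0 (m : ℤ) | (m : ℤ) ∣ F.eval r}

variable {F : ℤ[X]} {m : ℕ}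

lemma emod_eq_self_of_mem_rootsMod {r : ℤ} (hr : r ∈ rootsMod F m) : r % m = r := by
  obtain ⟨h_nonneg, h_lt⟩ := mem_Ico.1 (mem_filter.1 hr).1
  exact Int.emod_eq_of_lt h_nonneg h_lt

lemma emod_mem_rootsMod (hm : 0 < m) {n : ℤ} (hn : (m : ℤ) ∣ F.eval n) : n % m ∈ rootsMod F m := by
  have hm' : (0 : ℤ) < m := mod_cast hm
  have h_sub : (m : ℤ) ∣ F.eval n - F.eval (n % m) :=
    (Int.dvd_self_sub_emod).trans (sub_dvd_eval_sub n (n % m) F)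
  exact mem_filter.2 ⟨mem_Ico.2 ⟨Int.emod_nonneg _ hm'.ne', Int.emod_lt_of_pos _ hm'⟩,
    (dvd_sub_right hn).1 h_sub⟩

lemma card_rootsMod_prime_le_natDegree {p : ℕ} [Fact p.Prime]
    (hF : F.map (Int.castRingHom (ZMod p)) ≠ 0) : #(rootsMod F p) ≤ F.natDegree := by
  classical
  set f := F.map (Int.castRingHom (ZMod p))
  have h_maps (r : ℤ) (hr : r ∈ rootsMod F p) : (r : ZMod p) ∈ f.roots.toFinset := by
    rw [Multiset.mem_toFinset, mem_roots hF, IsRoot, eval_intCast_map]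
    exact (ZMod.intCast_zmod_eq_zero_iff_dvd _ p).2 (mem_filter.1 hr).2
  have h_inj : Set.InjOn (Int.cast : ℤ → ZMod p) (rootsMod F p) := fun r hr r' hr' h ↦ by
    rw [← emod_eq_self_of_mem_rootsMod hr, ← emod_eq_self_of_mem_rootsMod hr']
    exact (ZMod.intCast_eq_intCast_iff' _ _ _).1 h
  calc #(rootsMod F p) ≤ #f.roots.toFinset := card_le_card_of_injOn _ h_maps h_inj
    _ ≤ f.roots.card := Multiset.toFinset_card_le _
    _ ≤ f.natDegree := card_roots' f
    _ ≤ F.natDegree := natDegree_map_le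

-- A root modulo a squarefree `m` is determined by its residues modulo the primes dividing `m`.
lemma card_rootsMod_le_prod (hm : Squarefree m) :
    #(rootsMod F m) ≤ ∏ p ∈ m.primeFactors, #(rootsMod F p) := by
  rw [← card_pi]
  refine card_le_card_of_injOn (fun r p _ ↦ r % p) (fun r hr ↦ ?_) fun r hr r' hr' h ↦ ?_
  · refine mem_pi.2 fun p hp ↦ emod_mem_rootsMod (Nat.prime_of_mem_primeFactors hp).pos ?_
    exact (Int.natCast_dvd_natCast.2 (Nat.dvd_of_mem_primeFactors hp)).trans (mem_filter.1 hr).2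
  · have h_dvd : (m : ℤ) ∣ r' - r := by
      rw [← Nat.prod_primeFactors_of_squarefree hm, Nat.cast_prod]
      refine prod_dvd_of_coprime (fun p hp q hq hpq ↦ ?_) fun p hp ↦ ?_
      · exact Nat.isCoprime_iff_coprime.2 ((Nat.coprime_primes (Nat.prime_of_mem_primeFactors hp)
          (Nat.prime_of_mem_primeFactors hq)).2 hpq)
      · exact Int.ModEq.dvd (congrFun (congrFun h p) hp)
    rw [← emod_eq_self_of_mem_rootsMod hr, ← emod_eq_self_of_mem_rootsMod hr']
    exact Int.modEq_of_dvd h_dvd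

lemma card_rootsMod_le_pow (hm : Squarefree m)
    (hF : ∀ p ∈ m.primeFactors, F.map (Int.castRingHom (ZMod p)) ≠ 0) :
    #(rootsMod F m) ≤ F.natDegree ^ #m.primeFactors := by
  refine (card_rootsMod_le_prod hm).trans (prod_le_pow_card _ _ _ fun p hp ↦ ?_)
  have : Fact p.Prime := ⟨Nat.prime_of_mem_primeFactors hp⟩
  exact card_rootsMod_prime_le_natDegree (hF p hp)

lemma card_Icc_filter_modEq_le {x y : ℝ} (hxy : x ≤ y) (hm : 0 < m) (v : ℤ) :
    (#{n ∈ Icc ⌈x⌉ ⌊y⌋ | n ≡ v [ZMOD m]} : ℝ) ≤ (y - x) / m + 1 := by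
  have hm' : (0 : ℝ) < m := mod_cast hm
  have h_div {n : ℤ} (hn : n ≡ v [ZMOD m]) : v + m * ((n - v) / m) = n := by
    rw [Int.mul_ediv_cancel' hn.symm.dvd, add_sub_cancel]
  have h_card : #{n ∈ Icc ⌈x⌉ ⌊y⌋ | n ≡ v [ZMOD m]} ≤ #(Icc ⌈(x - v) / m⌉ ⌊(y - v) / m⌋) := by
    refine card_le_card_of_injOn (fun n ↦ (n - v) / m) (fun n hn ↦ ?_) fun n hn n' hn' h ↦ ?_
    · obtain ⟨hn, hnv⟩ := mem_filter.1 hn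
      obtain ⟨hxn, hny⟩ := mem_Icc.1 hn
      have hxn := Int.ceil_le.1 hxn
      have hny := Int.le_floor.1 hny
      rw [← h_div hnv] at hxn hny
      push_cast at hxn hny
      refine mem_Icc.2 ⟨Int.ceil_le.2 ?_, Int.le_floor.2 ?_⟩
      · rw [div_le_iff₀ hm']
        linarith
      · rw [le_div_iff₀ hm']
        linarith
    · rw [← h_div (mem_filter.1 hn).2, ← h_div (mem_filter.1 hn').2]
      exact congrArg (fun t ↦ v + m * t) h
  have h_nonneg : 0 ≤ (y - x) / m := div_nonneg (sub_nonneg.2 hxy) hm'.le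
  have h_floor : ((⌊(y - v) / m⌋ + 1 - ⌈(x - v) / m⌉ : ℤ) : ℝ) ≤ (y - x) / m + 1 := by
    have h_sub : (y - v) / m - (x - v) / m = (y - x) / m := by rw [← sub_div]; ring
    push_cast
    linarith [Int.floor_le ((y - v) / m), Int.le_ceil ((x - v) / m)]
  calc (#{n ∈ Icc ⌈x⌉ ⌊y⌋ | n ≡ v [ZMOD m]} : ℝ)
      ≤ ((⌊(y - v) / m⌋ + 1 - ⌈(x - v) / m⌉).toNat : ℤ) := by
        rw [← Int.card_Icc]
        exact_mod_cast h_card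
    _ ≤ (y - x) / m + 1 := by
        rw [Int.ofNat_toNat, Int.cast_max, Int.cast_zero]
        exact max_le h_floor (by linarith)

lemma card_Icc_filter_dvd_eval_le {x y : ℝ} (hxy : x ≤ y) (hm : 0 < m) :
    (#{n ∈ Icc ⌈x⌉ ⌊y⌋ | (m : ℤ) ∣ F.eval n} : ℝ) ≤ #(rootsMod F m) * ((y - x) / m + 1) := by
  have h_fiber : #{n ∈ Icc ⌈x⌉ ⌊y⌋ | (m : ℤ) ∣ F.eval n} ≤
      ∑ r ∈ rootsMod F m, #{n ∈ Icc ⌈x⌉ ⌊y⌋ | n ≡ r [ZMOD m]} := by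
    rw [card_eq_sum_card_fiberwise fun n hn ↦ emod_mem_rootsMod hm (mem_filter.1 hn).2]
    refine sum_le_sum fun r _ ↦ card_le_card fun n hn ↦ ?_
    obtain ⟨hn_filter, rfl⟩ := mem_filter.1 hn
    exact mem_filter.2 ⟨(mem_filter.1 hn_filter).1, (Int.mod_modEq n m).symm⟩
  calc (#{n ∈ Icc ⌈x⌉ ⌊y⌋ | (m : ℤ) ∣ F.eval n} : ℝ)
      ≤ ∑ r ∈ rootsMod F m, (#{n ∈ Icc ⌈x⌉ ⌊y⌋ | n ≡ r [ZMOD m]} : ℝ) := mod_cast h_fiber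
    _ ≤ #(rootsMod F m) * ((y - x) / m + 1) := by
        rw [← nsmul_eq_mul]
        exact sum_le_card_nsmul _ _ _ fun r _ ↦ card_Icc_filter_modEq_le hxy hm r

lemma map_castRingHom_ne_zero_of_gcd_eval_eq_one {p : ℕ} (hp : p ≠ 1) {n : ℤ}
    (hn : Int.gcd (F.eval n) p = 1) : F.map (Int.castRingHom (ZMod p)) ≠ 0 := fun h_zero ↦ by
  have h_eval : ((F.eval n : ℤ) : ZMod p) = 0 := by
    simpa only [h_zero, eval_zero, eq_intCast, Int.cast_id] using
      (eval_intCast_map (Int.castRingHom (ZMod p)) F n).symm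
  have h_dvd := (ZMod.intCast_zmod_eq_zero_iff_dvd _ p).1 h_eval
  rw [Int.gcd_eq_natAbs_right h_dvd, Int.natAbs_natCast] at hn
  exact hp hn

end Roots

section Tuples

lemma squarefree_nat_lcm {m n : ℕ} (hm : Squarefree m) (hn : Squarefree n) :
    Squarefree (m.lcm n) := by
  rw [Nat.squarefree_iff_factorization_le_one (Nat.lcm_ne_zero hm.ne_zero hn.ne_zero),
    Nat.factorization_lcm hm.ne_zero hn.ne_zero]
  exact fun p ↦ sup_le (hm.natFactorization_le_one p) (hn.natFactorization_le_one p)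

lemma squarefree_finset_lcm {ι : Type*} {s : Finset ι} {f : ι → ℕ}
    (hf : ∀ i ∈ s, Squarefree (f i)) : Squarefree (s.lcm f) := by
  classical
  induction s using Finset.induction_on with
  | empty => simp
  | insert i s _ ih =>
    rw [lcm_insert]
    exact squarefree_nat_lcm (hf i (mem_insert_self i s))
      (ih fun j hj ↦ hf j (mem_insert_of_mem hj))

lemma InP3.finset_lcm {ι : Type*} {s : Finset ι} {f : ι → ℕ} (hf : ∀ i ∈ s, InP3 (f i)) :
    InP3 (s.lcm f) := fun p hp hdvd ↦ by
  obtain ⟨i, hi, hpi⟩ :=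
    (hp.prime.dvd_finsetProd_iff f).1 (hdvd.trans (s.lcm_dvd_prod f))
  exact hf i hi p hp hpi

lemma card_divisors_le_two_pow {n : ℕ} (hn : Squarefree n) :
    #n.divisors ≤ 2 ^ #n.primeFactors := by
  rw [Nat.card_divisors hn.ne_zero]
  exact prod_le_pow_card _ _ _ fun p _ ↦ Nat.succ_le_succ (hn.natFactorization_le_one p)

/-- The least common multiples of the `r`-tuples of elements of `S`. They index the sum obtained by
expanding the `r`-th power of a sum over `S`. -/
def tupleLcms (S : Finset ℕ) (r : ℕ) : Finset ℕ :=
  (Fintype.piFinset fun _ : Fin r ↦ S).image univ.lcm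

variable {S : Finset ℕ} {r m : ℕ}

lemma squarefree_of_mem_tupleLcms (hS : ∀ d ∈ S, Squarefree d) (hm : m ∈ tupleLcms S r) :
    Squarefree m := by
  obtain ⟨q, hq, rfl⟩ := mem_image.1 hm
  exact squarefree_finset_lcm fun i _ ↦ hS _ (Fintype.mem_piFinset.1 hq i)

lemma InP3.of_mem_tupleLcms (hS : ∀ d ∈ S, InP3 d) (hm : m ∈ tupleLcms S r) : InP3 m := by
  obtain ⟨q, hq, rfl⟩ := mem_image.1 hm
  exact InP3.finset_lcm fun i _ ↦ hS _ (Fintype.mem_piFinset.1 hq i)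

lemma le_pow_of_mem_tupleLcms {D : ℝ} (hS : ∀ d ∈ S, d ≠ 0 ∧ (d : ℝ) ≤ D)
    (hm : m ∈ tupleLcms S r) : (m : ℝ) ≤ D ^ r := by
  obtain ⟨q, hq, rfl⟩ := mem_image.1 hm
  have hq (i) : q i ≠ 0 ∧ (q i : ℝ) ≤ D := hS _ (Fintype.mem_piFinset.1 hq i)
  have h_prod : univ.lcm q ≤ ∏ i, q i :=
    Nat.le_of_dvd (Nat.pos_of_ne_zero (prod_ne_zero_iff.2 fun i _ ↦ (hq i).1)) (lcm_dvd_prod univ q)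
  calc ((univ.lcm q : ℕ) : ℝ) ≤ ∏ i, (q i : ℝ) := mod_cast h_prod
    _ ≤ ∏ _ : Fin r, D := prod_le_prod (fun i _ ↦ (q i).cast_nonneg) fun i _ ↦ (hq i).2
    _ = D ^ r := by rw [prod_const, card_univ, Fintype.card_fin]

lemma card_filter_dvd_pow (S : Finset ℕ) (r a : ℕ) :
    #{d ∈ S | d ∣ a} ^ r = #{q ∈ Fintype.piFinset fun _ : Fin r ↦ S | univ.lcm q ∣ a} := by
  rw [← Fintype.card_piFinset_const]
  congr 1
  ext q
  simp only [Fintype.mem_piFinset, mem_filter, Finset.lcm_dvd_iff, mem_univ, forall_const,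
    forall_and]

lemma card_filter_lcm_eq_le (S : Finset ℕ) (r : ℕ) (hm : m ≠ 0) :
    #{q ∈ Fintype.piFinset fun _ : Fin r ↦ S | univ.lcm q = m} ≤ #m.divisors ^ r := by
  rw [← Fintype.card_piFinset_const]
  refine card_le_card fun q hq ↦ Fintype.mem_piFinset.2 fun i ↦ Nat.mem_divisors.2 ⟨?_, hm⟩
  rw [← (mem_filter.1 hq).2]
  exact dvd_lcm (mem_univ i)

lemma sum_card_filter_dvd_pow_le {ι : Type*} (hS : ∀ d ∈ S, Squarefree d) (r : ℕ) (I : Finset ι)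
    (g : ι → ℕ) :
    ∑ n ∈ I, #{d ∈ S | d ∣ g n} ^ r ≤
      ∑ m ∈ tupleLcms S r, (2 ^ r) ^ #m.primeFactors * #{n ∈ I | m ∣ g n} := by
  calc ∑ n ∈ I, #{d ∈ S | d ∣ g n} ^ r
      = ∑ q ∈ Fintype.piFinset fun _ : Fin r ↦ S, #{n ∈ I | univ.lcm q ∣ g n} := by
        simp only [card_filter_dvd_pow]
        exact sum_card_bipartiteAbove_eq_sum_card_bipartiteBelow
          fun n (q : Fin r → ℕ) ↦ univ.lcm q ∣ g n
    _ = ∑ m ∈ tupleLcms S r, #{q ∈ Fintype.piFinset fun _ : Fin r ↦ S | univ.lcm q = m} *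
          #{n ∈ I | m ∣ g n} :=
        sum_comp (fun m ↦ #{n ∈ I | m ∣ g n}) univ.lcm
    _ ≤ ∑ m ∈ tupleLcms S r, (2 ^ r) ^ #m.primeFactors * #{n ∈ I | m ∣ g n} := by
        gcongr with m hm
        have hm_sqf := squarefree_of_mem_tupleLcms hS hm
        calc #{q ∈ Fintype.piFinset fun _ : Fin r ↦ S | univ.lcm q = m} ≤ #m.divisors ^ r :=
              card_filter_lcm_eq_le S r hm_sqf.ne_zero
          _ ≤ (2 ^ #m.primeFactors) ^ r := by
              gcongr
              exact card_divisors_le_two_pow hm_sqf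
          _ = (2 ^ r) ^ #m.primeFactors := pow_right_comm _ _ _

end Tuples

section LinearForms

variable {k : ℕ} (a b : Fin k → ℤ)

/-- The product `∏ i, (a i * X + b i)` of linear forms, as an integer polynomial. -/
noncomputable def linearFormsProd : ℤ[X] := ∏ i, (C (a i) * X + C (b i))

lemma eval_linearFormsProd (n : ℤ) : (linearFormsProd a b).eval n = ∏ i, (a i * n + b i) := by
  simp [linearFormsProd, eval_prod]

lemma natDegree_linearFormsProd_le : (linearFormsProd a b).natDegree ≤ k :=
  calc (linearFormsProd a b).natDegree ≤ ∑ i, natDegree (C (a i) * X + C (b i)) :=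
        natDegree_prod_le _ _
    _ ≤ ∑ _ : Fin k, 1 := sum_le_sum fun i _ ↦ natDegree_linear_le
    _ = k := by simp

end LinearForms

section Moments

variable {F : ℤ[X]} {S : Finset ℕ} {x y H D : ℝ} {r : ℕ}

lemma card_Icc_filter_dvd_natAbs_eval_le {m : ℕ} (hm : Squarefree m)
    (hF : ∀ p ∈ m.primeFactors, F.map (Int.castRingHom (ZMod p)) ≠ 0)
    (hxy : x ≤ y) (hyx : y - x ≤ H) (hmH : m ≤ H) :
    (#{n ∈ Icc ⌈x⌉ ⌊y⌋ | m ∣ (F.eval n).natAbs} : ℝ) ≤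
      (F.natDegree : ℝ) ^ #m.primeFactors * (2 * H / m) := by
  have hm_pos : 0 < m := Nat.pos_of_ne_zero hm.ne_zero
  have hm_pos' : (0 : ℝ) < m := mod_cast hm_pos
  simp only [← Int.natCast_dvd]
  refine (card_Icc_filter_dvd_eval_le hxy hm_pos).trans ?_
  gcongr
  · exact_mod_cast card_rootsMod_le_pow hm hF
  · rw [div_add_one hm_pos'.ne']
    gcongr
    linarith

lemma sum_card_filter_dvd_eval_pow_le
    (hF : ∀ p : ℕ, p.Prime → p % 4 = 3 → F.map (Int.castRingHom (ZMod p)) ≠ 0)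
    (hxy : x ≤ y) (hyx : y - x ≤ H) (hH : 1 < H)
    (hS : ∀ d ∈ S, Squarefree d ∧ InP3 d ∧ (d : ℝ) ≤ D) (hD : D ^ r ≤ H) :
    ∑ n ∈ Icc ⌈x⌉ ⌊y⌋, (#{d ∈ S | d ∣ (F.eval n).natAbs} : ℝ) ^ r ≤
      2 * H * (exp 1 * √(3 / 2 * (1 + log H)) ^ (2 ^ r * F.natDegree)) := by
  have hT (m) (hm : m ∈ tupleLcms S r) : Squarefree m ∧ InP3 m ∧ (m : ℝ) ≤ H :=
    ⟨squarefree_of_mem_tupleLcms (fun d hd ↦ (hS d hd).1) hm,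
      InP3.of_mem_tupleLcms (fun d hd ↦ (hS d hd).2.1) hm,
      (le_pow_of_mem_tupleLcms (fun d hd ↦ ⟨(hS d hd).1.ne_zero, (hS d hd).2.2⟩) hm).trans hD⟩
  have h_count (m) (hm : m ∈ tupleLcms S r) :
      (#{n ∈ Icc ⌈x⌉ ⌊y⌋ | m ∣ (F.eval n).natAbs} : ℝ) ≤
        (F.natDegree : ℝ) ^ #m.primeFactors * (2 * H / m) := by
    obtain ⟨hm_sqf, hm_P3, hmH⟩ := hT m hm
    refine card_Icc_filter_dvd_natAbs_eval_le hm_sqf (fun p hp ↦ ?_) hxy hyx hmH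
    have hp_prime := Nat.prime_of_mem_primeFactors hp
    exact hF p hp_prime (hm_P3 p hp_prime (Nat.dvd_of_mem_primeFactors hp))
  calc ∑ n ∈ Icc ⌈x⌉ ⌊y⌋, (#{d ∈ S | d ∣ (F.eval n).natAbs} : ℝ) ^ r
      ≤ ∑ m ∈ tupleLcms S r, ((2 : ℝ) ^ r) ^ #m.primeFactors *
          #{n ∈ Icc ⌈x⌉ ⌊y⌋ | m ∣ (F.eval n).natAbs} := by
        exact_mod_cast sum_card_filter_dvd_pow_le (fun d hd ↦ (hS d hd).1) r (Icc ⌈x⌉ ⌊y⌋)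
          fun n ↦ (F.eval n).natAbs
    _ ≤ ∑ m ∈ tupleLcms S r, ((2 : ℝ) ^ r) ^ #m.primeFactors *
          ((F.natDegree : ℝ) ^ #m.primeFactors * (2 * H / m)) := by
        gcongr with m hm
        exact h_count m hm
    _ = 2 * H * ∑ m ∈ tupleLcms S r, ((2 ^ r * F.natDegree : ℕ) : ℝ) ^ #m.primeFactors / m := by
        rw [mul_sum]
        refine sum_congr rfl fun m _ ↦ ?_
        push_cast
        ring
    _ ≤ 2 * H * (exp 1 * √(3 / 2 * (1 + log H)) ^ (2 ^ r * F.natDegree)) := by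
        gcongr
        exact sum_pow_card_primeFactors_div_le hH _ hT

lemma abs_sum_divisors_le {lam : ℕ → ℝ} {B : ℝ} (hlam : ∀ d, |lam d| ≤ B)
    (hsupp : ∀ d, lam d ≠ 0 → d ∈ S) (a : ℕ) :
    |∑ d ∈ a.divisors, lam d| ≤ #{d ∈ S | d ∣ a} * B := by
  have h_sum : ∑ d ∈ a.divisors, lam d = ∑ d ∈ a.divisors with lam d ≠ 0, lam d :=
    (sum_filter_ne_zero _).symm
  have h_card : #{d ∈ a.divisors | lam d ≠ 0} ≤ #{d ∈ S | d ∣ a} := by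
    refine card_le_card fun d hd ↦ ?_
    obtain ⟨hda, hd₀⟩ := mem_filter.1 hd
    exact mem_filter.2 ⟨hsupp d hd₀, Nat.dvd_of_mem_divisors hda⟩
  have hB : 0 ≤ B := (abs_nonneg (lam 0)).trans (hlam 0)
  calc |∑ d ∈ a.divisors, lam d| ≤ ∑ d ∈ a.divisors with lam d ≠ 0, |lam d| :=
        h_sum ▸ abs_sum_le_sum_abs _ _
    _ ≤ #{d ∈ a.divisors | lam d ≠ 0} * B :=
        (sum_le_card_nsmul _ _ _ fun d _ ↦ hlam d).trans_eq (nsmul_eq_mul _ _)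
    _ ≤ #{d ∈ S | d ∣ a} * B := by gcongr

lemma sum_abs_sum_divisors_pow_le
    (hF : ∀ p : ℕ, p.Prime → p % 4 = 3 → F.map (Int.castRingHom (ZMod p)) ≠ 0)
    (hxy : x ≤ y) (hyx : y - x ≤ H) (hH : 1 < H) (hD : D ^ r ≤ H) {lam : ℕ → ℝ} {B : ℝ}
    (hsupp : ∀ d, lam d ≠ 0 → Squarefree d ∧ InP3 d ∧ (d : ℝ) ≤ D) (hlam : ∀ d, |lam d| ≤ B) :
    ∑ n ∈ Icc ⌈x⌉ ⌊y⌋, |∑ d ∈ (F.eval n).natAbs.divisors, lam d| ^ r ≤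
      2 * H * (exp 1 * √(3 / 2 * (1 + log H)) ^ (2 ^ r * F.natDegree)) * B ^ r := by
  have h_finite : (Function.support lam).Finite :=
    (Set.finite_le_nat ⌊D⌋₊).subset fun d hd ↦ Nat.le_floor (hsupp d hd).2.2
  have h_mem (d) : d ∈ h_finite.toFinset ↔ lam d ≠ 0 := by
    rw [h_finite.mem_toFinset, Function.mem_support]
  calc ∑ n ∈ Icc ⌈x⌉ ⌊y⌋, |∑ d ∈ (F.eval n).natAbs.divisors, lam d| ^ r
      ≤ ∑ n ∈ Icc ⌈x⌉ ⌊y⌋, (#{d ∈ h_finite.toFinset | d ∣ (F.eval n).natAbs} : ℝ) ^ r * B ^ r := by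
        refine sum_le_sum fun n _ ↦ ?_
        rw [← mul_pow]
        gcongr
        exact abs_sum_divisors_le hlam (fun d hd ↦ (h_mem d).2 hd) _
    _ ≤ 2 * H * (exp 1 * √(3 / 2 * (1 + log H)) ^ (2 ^ r * F.natDegree)) * B ^ r := by
        have hB : 0 ≤ B := (abs_nonneg (lam 0)).trans (hlam 0)
        rw [← sum_mul]
        gcongr
        exact sum_card_filter_dvd_eval_pow_le hF hxy hyx hH
          (fun d hd ↦ hsupp d ((h_mem d).1 hd)) hD

lemma sqrt_mul_one_add_pow_sixteen_le {l : ℝ} (hl : 4 ≤ l) : √(3 / 2 * (1 + l)) ^ 16 ≤ l ^ 12 :=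
  calc √(3 / 2 * (1 + l)) ^ 16 = (√(3 / 2 * (1 + l)) ^ 2) ^ 8 := by rw [← pow_mul]
    _ = (3 / 2 * (1 + l)) ^ 8 := by rw [Real.sq_sqrt (by linarith)]
    _ ≤ (2 * l) ^ 8 := pow_le_pow_left₀ (by linarith) (by linarith) 8
    _ = 4 ^ 4 * l ^ 8 := by ring
    _ ≤ l ^ 4 * l ^ 8 := by gcongr
    _ = l ^ 12 := by ring

lemma sqrt_mul_one_add_pow_mul_rpow_le {l : ℝ} (hl : 4 ≤ l) {m k : ℕ} (hmk : m ≤ k) :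
    √(3 / 2 * (1 + l)) ^ (2 ^ 4 * m) * (l ^ ((k : ℝ) / 2)) ^ 4 ≤ l ^ (14 * k) := by
  have h_one : 1 ≤ √(3 / 2 * (1 + l)) := Real.one_le_sqrt.2 (by linarith)
  have h_rpow : (l ^ ((k : ℝ) / 2)) ^ 4 = l ^ (2 * k) := by
    rw [← Real.rpow_mul_natCast (by linarith), ← Real.rpow_natCast]
    push_cast
    ring_nf
  calc √(3 / 2 * (1 + l)) ^ (2 ^ 4 * m) * (l ^ ((k : ℝ) / 2)) ^ 4
      ≤ √(3 / 2 * (1 + l)) ^ (16 * k) * l ^ (2 * k) := by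
        rw [h_rpow]
        gcongr
        norm_num
    _ ≤ (l ^ 12) ^ k * l ^ (2 * k) := by
        rw [pow_mul]
        gcongr
        exact sqrt_mul_one_add_pow_sixteen_le hl
    _ = l ^ (14 * k) := by rw [← pow_mul, ← pow_add]; ring_nf

theorem sieve_weights_second_moment_general {k : ℕ} (hdeg : F.natDegree ≤ k)
    (hF : ∀ p : ℕ, p.Prime → p % 4 = 3 → F.map (Int.castRingHom (ZMod p)) ≠ 0)
    (hx : exp 4 ≤ x) {lam : ℕ → ℝ} {w : ℤ → ℝ}
    (hsupp : ∀ d, lam d ≠ 0 → Squarefree d ∧ InP3 d ∧ (d : ℝ) ≤ x ^ ((1 : ℝ) / 4))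
    (hlam : ∀ d, |lam d| ≤ log x ^ ((k : ℝ) / 2))
    (hw : ∀ n, |w n| ≤ (∑ d ∈ (F.eval n).natAbs.divisors, lam d) ^ 2) :
    ∑ n ∈ Icc ⌈x⌉ ⌊2 * x⌋, w n ^ 2 ≤ 2 * exp 1 * x * log x ^ (14 * k) := by
  have hx₀ : 0 < x := (exp_pos 4).trans_le hx
  have hx₁ : 1 < x := (Real.one_lt_exp_iff.2 four_pos).trans_le hx
  have h_log : 4 ≤ log x := (Real.le_log_iff_exp_le hx₀).2 hx
  have h_root : (x ^ ((1 : ℝ) / 4)) ^ 4 ≤ x := by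
    rw [← Real.rpow_mul_natCast hx₀.le]
    norm_num
  calc ∑ n ∈ Icc ⌈x⌉ ⌊2 * x⌋, w n ^ 2
      ≤ ∑ n ∈ Icc ⌈x⌉ ⌊2 * x⌋, |∑ d ∈ (F.eval n).natAbs.divisors, lam d| ^ 4 := by
        refine sum_le_sum fun n _ ↦ ?_
        calc w n ^ 2 ≤ ((∑ d ∈ (F.eval n).natAbs.divisors, lam d) ^ 2) ^ 2 :=
              sq_le_sq.2 ((hw n).trans (le_abs_self _))
          _ = |∑ d ∈ (F.eval n).natAbs.divisors, lam d| ^ 4 := by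
              rw [← pow_mul, ← Even.pow_abs (by decide)]
    _ ≤ 2 * x * (exp 1 * √(3 / 2 * (1 + log x)) ^ (2 ^ 4 * F.natDegree)) *
          (log x ^ ((k : ℝ) / 2)) ^ 4 :=
        sum_abs_sum_divisors_pow_le hF (by linarith) (by linarith) hx₁ h_root hsupp hlam
    _ = 2 * exp 1 * x * (√(3 / 2 * (1 + log x)) ^ (2 ^ 4 * F.natDegree) *
          (log x ^ ((k : ℝ) / 2)) ^ 4) := by ring
    _ ≤ 2 * exp 1 * x * log x ^ (14 * k) := by
        gcongr
        exact sqrt_mul_one_add_pow_mul_rpow_le h_log hdeg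

end Moments

theorem sieve_weights_second_moment :
    ∃ C : ℝ, 0 < C ∧ ∃ X0 : ℝ, ∀ X : ℝ, X0 ≤ X →
    ∀ (k p0 W : ℕ) (a b : Fin k → ℤ) (v0 : ℤ) (lam : ℕ → ℝ) (w : ℤ → ℝ),
    -- sieve setup
    0 < k → (k : ℝ) ≤ Real.log X ^ ((1 : ℝ) / 5) →
    p0.Prime → Real.log (Real.log X) / 2 ≤ (p0 : ℝ) → (p0 : ℝ) ≤ X →
    W = ∏ p ∈ (Finset.range (⌊2 * Real.log X ^ ((1 : ℝ) / 3)⌋₊ + 1)).filter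
          (fun p : ℕ => p.Prime ∧ (p : ℝ) ≤ 2 * Real.log X ^ ((1 : ℝ) / 3) ∧ p % 4 = 3 ∧ p ≠ p0), p →
    Function.Injective (fun i => (a i, b i)) →
    (∀ p : ℕ, p.Prime → p % 4 = 3 → ∃ n : ℤ, Int.gcd (∏ i, (a i * n + b i)) (p : ℤ) = 1) →
    (∀ i, 0 < a i ∧ (a i : ℝ) ≤ Real.log X ^ ((1 : ℝ) / 3) ∧
      Int.gcd (2 * (p0 : ℤ)) (a i) = 1 ∧ 0 < b i ∧ (b i : ℝ) < X) →
    Int.gcd (∏ i, (a i * v0 + b i)) (W : ℤ) = 1 →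
    (∀ d : ℕ, ¬(Squarefree d ∧ (d : ℝ) < X ^ ((1 : ℝ) / 10) ∧ InP3 d ∧
      Nat.Coprime d (p0 * W)) → lam d = 0) →
    (∀ d : ℕ, |lam d| ≤ Real.log X ^ ((k : ℝ) / 2)) →
    (∀ n : ℤ, w n = if n % (W : ℤ) = v0 % (W : ℤ) then
        (∑ d ∈ (∏ i, (a i * n + b i)).natAbs.divisors, lam d) ^ 2 else 0) →
    -- conclusion
    ∑ n ∈ Finset.Icc ⌈X⌉ ⌊2 * X⌋, (w n) ^ 2 ≤ C * X * Real.log X ^ (16 * k ^ 2) := by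
  refine ⟨2 * exp 1, by positivity, exp 4, fun X hX k p0 W a b v0 lam w _ _ _ _ _ _ _ hadm _ _
    hsupp hlam hw ↦ ?_⟩
  have hX_one : 1 ≤ X := (Real.one_le_exp four_pos.le).trans hX
  have h_log : 1 ≤ log X := (Real.le_log_iff_exp_le (one_pos.trans_le hX_one)).2
    ((Real.exp_le_exp.2 (by norm_num)).trans hX)
  calc ∑ n ∈ Icc ⌈X⌉ ⌊2 * X⌋, w n ^ 2 ≤ 2 * exp 1 * X * log X ^ (14 * k) := by
        refine sieve_weights_second_moment_general (natDegree_linearFormsProd_le a b)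
          (fun p hp hp₃ ↦ ?_) hX (fun d hd ↦ ?_) hlam fun n ↦ ?_
        · obtain ⟨n, hn⟩ := hadm p hp hp₃
          rw [← eval_linearFormsProd] at hn
          exact map_castRingHom_ne_zero_of_gcd_eval_eq_one hp.ne_one hn
        · obtain ⟨hd_sqf, hdX, hd_P3, _⟩ := not_imp_comm.1 (hsupp d) hd
          refine ⟨hd_sqf, hd_P3, hdX.le.trans ?_⟩
          exact Real.rpow_le_rpow_of_exponent_le hX_one (by norm_num)
        · rw [hw, eval_linearFormsProd]
          split_ifs <;> simp [sq_nonneg]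
    _ ≤ 2 * exp 1 * X * log X ^ (16 * k ^ 2) := by
        gcongr
        exacts [by norm_num, Nat.le_self_pow two_ne_zero k]
end

section
/- Fix C > 0. There exists a constant c = c(C) > 0 such that for all sufficiently large t and every positive integer a with a ≤ (log t)^C, one has #{m < t : m ∈ ⟨P1⟩, gcd(m, a) = 1} ≥ c · t · (log t)^{−1/2} · ∏_{p | a, p ≡ 1 (mod 4)} (1 − 1/p), where the product is over the prime divisors of a congruent to 1 mod 4. -/
/-- `⟨P1⟩`: positive integers all of whose prime factors are `≡ 1 (mod 4)` (contains 1). -/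
def InP1 (n : ℕ) : Prop := 0 < n ∧ ∀ p : ℕ, p.Prime → p ∣ n → p % 4 = 1

/-!
Write `f` for the indicator function of `⟨P1⟩` and `χ₄` for the nontrivial character modulo `4`.
On prime powers, hence everywhere, `ζ * χ₄` is at most `f * f` convolved with the indicators of the
squares and of `{1, 2}`. As `∑ (ζ * χ₄)(n) / n ≫ log x` over `n ≤ x`, this gives
`∑ f(n) / n ≫ √(log x)`, and sieving out the primes `p ≡ 1 (mod 4)` dividing `a`, one at a time,
costs a factor `1 - 1 / p` each.

To pass from this logarithmic density to a count, let `g` be the indicator of the elements of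
`⟨P1⟩` coprime to `a`. Since `g` is completely multiplicative, `log = Λ * ζ` twists to
`g log = g * g Λ`, so `∑ g(n) log n = ∑ g(e) ∑ g(d) Λ(d)` over `n ≤ t`, `e ≤ t` and `d ≤ t / e`.
For `e ≤ t ^ β` the inner sum is at least `θ(t / e; 4, 1) - log a`, which is `≫ t / e` by a
Chebyshev-type bound that follows from Mertens' theorem twisted by `χ₄`, as long as `log a` is
small compared with `t ^ (1 - β)`.
-/

open Finset Filter
open ArithmeticFunction hiding log
open Real (log exp)
open scoped ArithmeticFunction.zeta Chebyshev

namespace P1Integers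

section LogSum

/-- The logarithmic sum `∑ f n / n` over `1 ≤ n ≤ x`. -/
noncomputable def logSum (f : ArithmeticFunction ℝ) (x : ℝ) : ℝ := ∑ n ∈ Ioc 0 ⌊x⌋₊, f n / n

variable {f g : ArithmeticFunction ℝ}

lemma logSum_nonneg (hf : ∀ n, 0 ≤ f n) (x : ℝ) : 0 ≤ logSum f x :=
  sum_nonneg fun n _ ↦ div_nonneg (hf n) n.cast_nonneg

lemma logSum_le_logSum (hfg : ∀ n, f n ≤ g n) (x : ℝ) : logSum f x ≤ logSum g x :=
  sum_le_sum fun n _ ↦ div_le_div_of_nonneg_right (hfg n) n.cast_nonneg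

lemma logSum_mono (hf : ∀ n, 0 ≤ f n) : Monotone (logSum f) := fun _ _ hxy ↦
  sum_le_sum_of_subset_of_nonneg (Ioc_subset_Ioc_right (Nat.floor_mono hxy))
    fun n _ _ ↦ div_nonneg (hf n) n.cast_nonneg

lemma logSum_add (f g : ArithmeticFunction ℝ) (x : ℝ) :
    logSum (f + g) x = logSum f x + logSum g x := by
  simp only [logSum, ArithmeticFunction.add_apply, add_div, sum_add_distrib]

lemma logSum_sub_logSum (f : ArithmeticFunction ℝ) {x y : ℝ} (hyx : y ≤ x) :
    logSum f x - logSum f y = ∑ n ∈ Ioc ⌊y⌋₊ ⌊x⌋₊, f n / n := by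
  rw [logSum, logSum, ← sum_Ioc_consecutive _ (Nat.zero_le _) (Nat.floor_mono hyx),
    add_sub_cancel_left]

lemma logSum_sub_logSum_div_le (hf : ∀ n, 0 ≤ f n) {K x : ℝ} (hK : 1 ≤ K)
    (hx : 0 < x) :
    logSum f x - logSum f (x / K) ≤ K / x * ∑ n ∈ Ioc 0 ⌊x⌋₊, f n := by
  rw [logSum_sub_logSum f (div_le_self hx.le hK), mul_sum]
  calc ∑ n ∈ Ioc ⌊x / K⌋₊ ⌊x⌋₊, f n / n ≤ ∑ n ∈ Ioc ⌊x / K⌋₊ ⌊x⌋₊, K / x * f n := by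
        refine sum_le_sum fun n hn ↦ ?_
        have hxn : x / K < n := (Nat.floor_lt (by positivity)).1 (mem_Ioc.1 hn).1
        rw [div_eq_inv_mul, ← inv_div x K]
        exact mul_le_mul_of_nonneg_right (inv_anti₀ (by positivity) hxn.le) (hf n)
    _ ≤ ∑ n ∈ Ioc 0 ⌊x⌋₊, K / x * f n :=
        sum_le_sum_of_subset_of_nonneg (Ioc_subset_Ioc_left (Nat.zero_le _))
          fun n _ _ ↦ mul_nonneg (by positivity) (hf n)

end LogSum

section Convolution

variable {f g : ArithmeticFunction ℝ}

lemma pmul_mul_of_map_mul {h : ArithmeticFunction ℝ} (hh : ∀ m n, h (m * n) = h m * h n)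
    (f g : ArithmeticFunction ℝ) : h.pmul (f * g) = h.pmul f * h.pmul g := by
  ext n
  simp only [pmul_apply, mul_apply, mul_sum]
  refine sum_congr rfl fun x hx ↦ ?_
  rw [← (Nat.mem_divisorsAntidiagonal.1 hx).1, hh]
  ring

lemma pmul_log_of_map_mul (hf : ∀ m n, f (m * n) = f m * f n) :
    f.pmul ArithmeticFunction.log = f.pmul Λ * f := by
  rw [← vonMangoldt_mul_zeta, pmul_mul_of_map_mul hf, pmul_zeta]

lemma mul_apply_nonneg (hf : ∀ n, 0 ≤ f n) (hg : ∀ n, 0 ≤ g n) (n : ℕ) : 0 ≤ (f * g) n := by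
  rw [mul_apply]
  exact sum_nonneg fun _ _ ↦ mul_nonneg (hf _) (hg _)

lemma apply_mul_apply_le_mul_apply (hf : ∀ n, 0 ≤ f n) (hg : ∀ n, 0 ≤ g n) {m n : ℕ}
    (hmn : m * n ≠ 0) : f m * g n ≤ (f * g) (m * n) := by
  rw [mul_apply]
  exact single_le_sum (f := fun x : ℕ × ℕ ↦ f x.1 * g x.2) (fun _ _ ↦ mul_nonneg (hf _) (hg _))
    (Nat.mem_divisorsAntidiagonal.2 ⟨rfl, hmn⟩ : (m, n) ∈ _)

lemma sum_Ioc_floor_mul (f g : ArithmeticFunction ℝ) (x : ℝ) :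
    ∑ n ∈ Ioc 0 ⌊x⌋₊, (f * g) n =
      ∑ d ∈ Ioc 0 ⌊x⌋₊, f d * ∑ e ∈ Ioc 0 ⌊x / d⌋₊, g e := by
  simp only [Nat.floor_div_natCast, sum_Ioc_mul_eq_sum_sum]

lemma logSum_mul (f g : ArithmeticFunction ℝ) (x : ℝ) :
    logSum (f * g) x = ∑ d ∈ Ioc 0 ⌊x⌋₊, f d / d * logSum g (x / d) := by
  let inv : ArithmeticFunction ℝ := ⟨fun n ↦ (n : ℝ)⁻¹, by simp⟩
  have map_mul_inv (m n : ℕ) : inv (m * n) = inv m * inv n := by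
    simp [inv, mul_comm]
  have inv_pmul (h : ArithmeticFunction ℝ) (n : ℕ) : inv.pmul h n = h n / n := by
    rw [pmul_apply, div_eq_inv_mul]
    rfl
  have := sum_Ioc_floor_mul (inv.pmul f) (inv.pmul g) x
  rw [← pmul_mul_of_map_mul map_mul_inv] at this
  simpa only [inv_pmul, logSum] using this

lemma logSum_mul_le (hf : ∀ n, 0 ≤ f n) (hg : ∀ n, 0 ≤ g n) (x : ℝ) :
    logSum (f * g) x ≤ logSum f x * logSum g x := by
  rw [logSum_mul, logSum, sum_mul]
  refine sum_le_sum fun d hd ↦ mul_le_mul_of_nonneg_left (logSum_mono hg ?_)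
    (div_nonneg (hf d) d.cast_nonneg)
  obtain ⟨hd₀, hdx⟩ := mem_Ioc.1 hd
  have hx : 0 ≤ x := (Nat.pos_of_floor_pos (hd₀.trans_le hdx)).le
  exact div_le_self hx (Nat.one_le_cast.2 hd₀)

end Convolution

section Mertens

lemma psi_le_six_mul {x : ℝ} (hx : 0 ≤ x) : ψ x ≤ 6 * x := by
  have log_four : log 4 = 2 * log 2 := by
    rw [show (4 : ℝ) = 2 ^ 2 by norm_num, Real.log_pow, Nat.cast_ofNat]
  refine (Chebyshev.psi_le_const_mul_self hx).trans (mul_le_mul_of_nonneg_right ?_ hx)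
  linarith [Real.log_two_lt_d9]

lemma sum_log_eq_log_factorial (N : ℕ) : ∑ n ∈ Ioc 0 N, log n = log N.factorial := by
  induction N with
  | zero => simp
  | succ N ih =>
    rw [sum_Ioc_succ_top N.zero_le, ih, Nat.factorial_succ, Nat.cast_mul,
      Real.log_mul (by positivity) (by positivity), add_comm]

lemma log_factorial_floor_eq_sum (x : ℝ) :
    log ⌊x⌋₊.factorial = ∑ d ∈ Ioc 0 ⌊x⌋₊, Λ d * ⌊x / d⌋₊ := by
  have h := sum_Ioc_mul_zeta_eq_sum Λ ⌊x⌋₊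
  rw [vonMangoldt_mul_zeta] at h
  simpa only [log_apply, sum_log_eq_log_factorial, Nat.floor_div_natCast] using h

lemma log_factorial_floor_le {x : ℝ} (hx : 1 ≤ x) : log ⌊x⌋₊.factorial ≤ x * log x := by
  have hfloor : (⌊x⌋₊ : ℝ) ≤ x := Nat.floor_le (by linarith)
  have hfloor_pos : (0 : ℝ) < ⌊x⌋₊ := Nat.cast_pos.2 (Nat.floor_pos.2 hx)
  calc log ⌊x⌋₊.factorial ≤ log ((⌊x⌋₊ : ℝ) ^ ⌊x⌋₊) :=
        Real.log_le_log (by positivity) (mod_cast Nat.factorial_le_pow _)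
    _ = ⌊x⌋₊ * log ⌊x⌋₊ := Real.log_pow _ _
    _ ≤ x * log x := by gcongr

lemma le_log_factorial_floor {x : ℝ} (hx : 1 ≤ x) :
    x * log x - 2 * x ≤ log ⌊x⌋₊.factorial := by
  have hx₀ : 0 < x := by linarith
  have hpow : ⌊x⌋₊ * log x - log ⌊x⌋₊.factorial ≤ x := by
    rw [← Real.log_pow, ← Real.log_div (by positivity) (by positivity),
      Real.log_le_iff_le_exp (by positivity)]
    exact Real.pow_div_factorial_le_exp _ hx₀.le _
  have hfloor : x * log x - log x ≤ ⌊x⌋₊ * log x := by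
    rw [← sub_one_mul]
    exact mul_le_mul_of_nonneg_right (Nat.sub_one_lt_floor x).le (Real.log_nonneg hx)
  linarith [Real.log_le_sub_one_of_pos hx₀]

theorem abs_logSum_vonMangoldt_sub_log_le {x : ℝ} (hx : 1 ≤ x) :
    |logSum Λ x - log x| ≤ 6 := by
  have hx₀ : 0 < x := by linarith
  have mul_logSum : x * logSum Λ x = ∑ d ∈ Ioc 0 ⌊x⌋₊, Λ d * (x / d) := by
    rw [logSum, mul_sum]
    exact sum_congr rfl fun d _ ↦ by ring
  have lower : log ⌊x⌋₊.factorial ≤ x * logSum Λ x := by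
    rw [log_factorial_floor_eq_sum, mul_logSum]
    gcongr with d
    exact Nat.floor_le (by positivity)
  have upper : x * logSum Λ x ≤ log ⌊x⌋₊.factorial + ψ x := by
    rw [log_factorial_floor_eq_sum, mul_logSum, Chebyshev.psi, ← sum_add_distrib]
    refine sum_le_sum fun d _ ↦ ?_
    rw [← mul_add_one]
    gcongr
    exact (Nat.lt_floor_add_one _).le
  have := le_log_factorial_floor hx
  have := log_factorial_floor_le hx
  have := psi_le_six_mul hx₀.le
  have hmul : |x * (logSum Λ x - log x)| ≤ x * 6 := by
    rw [abs_le]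
    constructor <;> linarith
  rwa [abs_mul, abs_of_pos hx₀, mul_le_mul_iff_right₀ hx₀] at hmul

theorem abs_logSum_pmul_log_sub_le {f : ArithmeticFunction ℝ}
    (hf : ∀ m n, f (m * n) = f m * f n) (hf_abs : ∀ n, |f n| ≤ 1) {A x : ℝ} (hx : 1 ≤ x)
    (htail : ∀ y, 1 ≤ y → y ≤ x → |logSum f x - logSum f y| ≤ A / y) :
    |logSum (f.pmul ArithmeticFunction.log) x - logSum f x * logSum (f.pmul Λ) x| ≤ 6 * A := by
  have hx₀ : 0 < x := by linarith
  have hA : 0 ≤ A := by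
    have := mul_nonneg ((abs_nonneg _).trans (htail x hx le_rfl)) hx₀.le
    rwa [div_mul_cancel₀ _ hx₀.ne'] at this
  have hterm : ∀ d ∈ Ioc 0 ⌊x⌋₊,
      |f.pmul Λ d / d * (logSum f (x / d) - logSum f x)| ≤ A / x * Λ d := by
    intro d hd
    obtain ⟨hd₀, hdx⟩ := mem_Ioc.1 hd
    have hd₀' : (0 : ℝ) < d := Nat.cast_pos.2 hd₀
    have hdx' : (d : ℝ) ≤ x := (Nat.le_floor_iff hx₀.le).1 hdx
    have hcoef : |f.pmul Λ d / d| ≤ Λ d / d := by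
      rw [pmul_apply, abs_div, abs_mul, abs_of_nonneg vonMangoldt_nonneg, Nat.abs_cast]
      gcongr
      exact mul_le_of_le_one_left vonMangoldt_nonneg (hf_abs d)
    have hdiff : |logSum f (x / d) - logSum f x| ≤ A / (x / d) := by
      rw [abs_sub_comm]
      exact htail _ ((one_le_div₀ hd₀').2 hdx') (div_le_self hx₀.le (Nat.one_le_cast.2 hd₀))
    calc |f.pmul Λ d / d * (logSum f (x / d) - logSum f x)| ≤ Λ d / d * (A / (x / d)) := by
          rw [abs_mul]
          exact mul_le_mul hcoef hdiff (abs_nonneg _) (div_nonneg vonMangoldt_nonneg hd₀'.le)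
      _ = A / x * Λ d := by field_simp
  calc |logSum (f.pmul ArithmeticFunction.log) x - logSum f x * logSum (f.pmul Λ) x|
      = |∑ d ∈ Ioc 0 ⌊x⌋₊, f.pmul Λ d / d * (logSum f (x / d) - logSum f x)| := by
        rw [pmul_log_of_map_mul hf, logSum_mul, logSum.eq_1 (f.pmul Λ), mul_sum, ← sum_sub_distrib]
        simp only [mul_sub, mul_comm (logSum f x)]
    _ ≤ ∑ d ∈ Ioc 0 ⌊x⌋₊, A / x * Λ d := (abs_sum_le_sum_abs _ _).trans (sum_le_sum hterm)
    _ = A / x * ψ x := by rw [← mul_sum, Chebyshev.psi]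
    _ ≤ A / x * (6 * x) := by gcongr; exact psi_le_six_mul hx₀.le
    _ = 6 * A := by field_simp

end Mertens

section Abel

lemma abs_sum_Ioc_mul_sub_le_of_antitoneOn {c g : ℕ → ℝ} {B : ℝ} {M N : ℕ} (hMN : M ≤ N)
    (hc : ∀ n, |∑ k ∈ Ioc M n, c k| ≤ B) (hg : AntitoneOn g (Set.Ioi M)) :
    |∑ n ∈ Ioc M N, c n * g n - (∑ n ∈ Ioc M N, c n) * g (N + 1)| ≤
      B * (g (M + 1) - g (N + 1)) := by
  induction N, hMN using Nat.le_induction with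
  | base => simp
  | succ N hMN ih =>
    have hle : g (N + 2) ≤ g (N + 1) :=
      hg (Set.mem_Ioi.2 (by omega)) (Set.mem_Ioi.2 (by omega)) (by omega)
    have hstep : |(∑ n ∈ Ioc M (N + 1), c n) * (g (N + 1) - g (N + 2))| ≤
        B * (g (N + 1) - g (N + 2)) := by
      rw [abs_mul, abs_of_nonneg (sub_nonneg.2 hle)]
      exact mul_le_mul_of_nonneg_right (hc _) (sub_nonneg.2 hle)
    calc |∑ n ∈ Ioc M (N + 1), c n * g n - (∑ n ∈ Ioc M (N + 1), c n) * g (N + 2)|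
        = |(∑ n ∈ Ioc M N, c n * g n - (∑ n ∈ Ioc M N, c n) * g (N + 1)) +
            (∑ n ∈ Ioc M (N + 1), c n) * (g (N + 1) - g (N + 2))| := by
          rw [sum_Ioc_succ_top hMN, sum_Ioc_succ_top hMN]
          congr 1
          ring
      _ ≤ B * (g (M + 1) - g (N + 1)) + B * (g (N + 1) - g (N + 2)) :=
          (abs_add_le _ _).trans (add_le_add ih hstep)
      _ = B * (g (M + 1) - g (N + 2)) := by ring

lemma abs_sum_Ioc_mul_le_of_antitoneOn {c g : ℕ → ℝ} {B : ℝ} {M N : ℕ} (hMN : M ≤ N)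
    (hc : ∀ n, |∑ k ∈ Ioc M n, c k| ≤ B) (hg : AntitoneOn g (Set.Ioi M)) (hg₀ : ∀ n, 0 ≤ g n) :
    |∑ n ∈ Ioc M N, c n * g n| ≤ B * g (M + 1) := by
  have hboundary : |(∑ n ∈ Ioc M N, c n) * g (N + 1)| ≤ B * g (N + 1) := by
    rw [abs_mul, abs_of_nonneg (hg₀ _)]
    exact mul_le_mul_of_nonneg_right (hc N) (hg₀ _)
  calc |∑ n ∈ Ioc M N, c n * g n|
      = |(∑ n ∈ Ioc M N, c n * g n - (∑ n ∈ Ioc M N, c n) * g (N + 1)) +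
          (∑ n ∈ Ioc M N, c n) * g (N + 1)| := by rw [sub_add_cancel]
    _ ≤ B * (g (M + 1) - g (N + 1)) + B * g (N + 1) :=
        (abs_add_le _ _).trans
          (add_le_add (abs_sum_Ioc_mul_sub_le_of_antitoneOn hMN hc hg) hboundary)
    _ = B * g (M + 1) := by ring

end Abel

section CharacterModFour

/-- The nontrivial Dirichlet character modulo `4`, as a real arithmetic function. -/
def chi : ArithmeticFunction ℝ := ⟨fun n ↦ (ZMod.χ₄ n : ℤ), by simp⟩

lemma chi_apply (n : ℕ) : chi n = (ZMod.χ₄ n : ℤ) := rfl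

lemma chi_eq_ite (n : ℕ) : chi n = if n % 2 = 0 then 0 else if n % 4 = 1 then 1 else -1 := by
  rw [chi_apply, ZMod.χ₄_nat_eq_if_mod_four]
  split_ifs <;> simp

lemma chi_mul (m n : ℕ) : chi (m * n) = chi m * chi n := by
  simp only [chi_apply, Nat.cast_mul, map_mul, Int.cast_mul]

lemma chi_one : chi 1 = 1 := by norm_num [chi_eq_ite]

lemma abs_chi_le_one (n : ℕ) : |chi n| ≤ 1 := by
  rw [chi_eq_ite]
  split_ifs <;> norm_num

lemma sum_Ioc_chi (N : ℕ) :
    ∑ n ∈ Ioc 0 N, chi n = if N % 4 = 1 ∨ N % 4 = 2 then 1 else 0 := by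
  induction N with
  | zero => simp
  | succ N ih =>
    rw [sum_Ioc_succ_top N.zero_le, ih, chi_eq_ite]
    split_ifs <;> first | omega | norm_num

lemma abs_sum_Ioc_chi_le_one (M N : ℕ) : |∑ n ∈ Ioc M N, chi n| ≤ 1 := by
  rcases le_total M N with hMN | hNM
  · have := sum_Ioc_consecutive chi M.zero_le hMN
    rw [← eq_sub_iff_add_eq'] at this
    rw [this, sum_Ioc_chi, sum_Ioc_chi]
    split_ifs <;> norm_num
  · simp [Ioc_eq_empty_of_le hNM]

lemma abs_logSum_chi_sub_le {x y : ℝ} (hy : 0 < y) (hyx : y ≤ x) :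
    |logSum chi x - logSum chi y| ≤ 1 / y := by
  rw [logSum_sub_logSum _ hyx]
  simp only [div_eq_mul_inv]
  have hanti : AntitoneOn (fun n : ℕ ↦ (n : ℝ)⁻¹) (Set.Ioi ⌊y⌋₊) := fun m hm n _ hmn ↦
    inv_anti₀ (Nat.cast_pos.2 (Nat.zero_lt_of_lt hm)) (Nat.cast_le.2 hmn)
  refine (abs_sum_Ioc_mul_le_of_antitoneOn (Nat.floor_mono hyx) (abs_sum_Ioc_chi_le_one _) hanti
    fun n ↦ by positivity).trans (mul_le_mul_of_nonneg_left (inv_anti₀ hy ?_) zero_le_one)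
  exact_mod_cast (Nat.lt_floor_add_one y).le

lemma half_le_logSum_chi {x : ℝ} (hx : 1 ≤ x) : 1 / 2 ≤ logSum chi x := by
  rcases lt_or_ge x 2 with hx₂ | hx₂
  · have hfloor : ⌊x⌋₊ = 1 := (Nat.floor_eq_iff (by linarith)).2 (by norm_num; exact ⟨hx, hx₂⟩)
    norm_num [logSum, hfloor, chi_one]
  · have htail := abs_logSum_chi_sub_le zero_lt_two hx₂
    have hlogSum_two : logSum chi 2 = 1 := by
      norm_num [logSum, sum_Ioc_succ_top, chi_eq_ite]
    rw [hlogSum_two] at htail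
    linarith [(abs_le.1 htail).1]

lemma abs_logSum_chi_pmul_log_le_one (x : ℝ) :
    |logSum (chi.pmul ArithmeticFunction.log) x| ≤ 1 := by
  rcases lt_or_ge x 2 with hx₂ | hx₂
  · have hfloor : ⌊x⌋₊ ≤ 1 :=
      Nat.lt_succ_iff.1 ((Nat.floor_lt' two_ne_zero).2 (by exact_mod_cast hx₂))
    have : logSum (chi.pmul ArithmeticFunction.log) x = 0 := by
      refine sum_eq_zero fun n hn ↦ ?_
      obtain rfl : n = 1 := by have := mem_Ioc.1 hn; omega
      simp
    simp [this]
  have hzero : logSum (chi.pmul ArithmeticFunction.log) 2 = 0 := by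
    norm_num [logSum, sum_Ioc_succ_top, chi_eq_ite]
  have hanti : AntitoneOn (fun n : ℕ ↦ log n / n) (Set.Ioi 2) := by
    have exp_le {n : ℕ} (hn : 2 < n) : exp 1 ≤ n :=
      Real.exp_one_lt_three.le.trans (by exact_mod_cast hn)
    exact fun m hm n hn hmn ↦
      Real.log_div_self_antitoneOn (exp_le hm) (exp_le hn) (Nat.cast_le.2 hmn)
  rw [← sub_zero (logSum _ x), ← hzero, logSum_sub_logSum _ hx₂, Nat.floor_ofNat]
  simp only [pmul_apply, log_apply, mul_div_assoc]
  calc _ ≤ 1 * (log (3 : ℕ) / (3 : ℕ)) :=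
        abs_sum_Ioc_mul_le_of_antitoneOn (Nat.le_floor hx₂) (abs_sum_Ioc_chi_le_one _) hanti
          fun n ↦ div_nonneg (Real.log_natCast_nonneg n) n.cast_nonneg
    _ ≤ 1 := by
        push_cast
        linarith [Real.log_le_sub_one_of_pos (zero_lt_three (α := ℝ))]

theorem abs_logSum_chi_pmul_vonMangoldt_le {x : ℝ} (hx : 1 ≤ x) :
    |logSum (chi.pmul Λ) x| ≤ 14 := by
  have hlog := abs_logSum_chi_pmul_log_le_one x
  have hmul := abs_logSum_pmul_log_sub_le chi_mul abs_chi_le_one hx (A := 1)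
    fun y hy ↦ abs_logSum_chi_sub_le (by linarith)
  have hprod : |logSum chi x * logSum (chi.pmul Λ) x| ≤ 7 := by
    rw [abs_le] at *
    constructor <;> linarith
  rw [abs_mul, abs_of_nonneg (by linarith [half_le_logSum_chi hx])] at hprod
  linarith [mul_le_mul_of_nonneg_right (half_le_logSum_chi hx) (abs_nonneg (logSum (chi.pmul Λ) x))]

end CharacterModFour

section Growth

lemma isLittleO_rpow_rpow {r s : ℝ} (hrs : r < s) :
    (fun x : ℝ ↦ x ^ r) =o[atTop] fun x ↦ x ^ s := by
  refine (Asymptotics.isLittleO_iff_tendsto' ?_).2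
    ((tendsto_rpow_neg_atTop (sub_pos.2 hrs)).congr' ?_)
  · filter_upwards [eventually_gt_atTop 0] with x hx h
    exact absurd h (Real.rpow_pos_of_pos hx s).ne'
  · filter_upwards [eventually_gt_atTop 0] with x hx
    rw [neg_sub, Real.rpow_sub hx]

lemma eventually_rpow_le_mul_rpow {r s : ℝ} (hrs : r < s) {K : ℝ} (hK : 0 < K) :
    ∀ᶠ t : ℝ in atTop, t ^ r ≤ K * t ^ s := by
  filter_upwards [(isLittleO_rpow_rpow hrs).bound hK, eventually_ge_atTop 0] with t ht ht₀
  rwa [Real.norm_of_nonneg (Real.rpow_nonneg ht₀ r),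
    Real.norm_of_nonneg (Real.rpow_nonneg ht₀ s)] at ht

lemma eventually_log_rpow_le_exp_rpow (r : ℝ) {s : ℝ} (hs : 0 < s) :
    ∀ᶠ t : ℝ in atTop, log t ^ r ≤ exp (t ^ s) := by
  filter_upwards [(isLittleO_log_rpow_rpow_atTop r hs).bound one_pos, eventually_ge_atTop 0]
    with t ht ht₀
  rw [one_mul, Real.norm_of_nonneg (Real.rpow_nonneg ht₀ s)] at ht
  linarith [le_abs_self (log t ^ r), Real.norm_eq_abs (log t ^ r), Real.add_one_le_exp (t ^ s)]

end Growth

section PrimesOneModFour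

/-- The Chebyshev function `θ(x; 4, 1)` of the primes congruent to `1` modulo `4`. -/
noncomputable def thetaOne (x : ℝ) : ℝ := ∑ p ∈ Ioc 0 ⌊x⌋₊ with p.Prime ∧ p % 4 = 1, log p

lemma one_add_chi_mul_vonMangoldt_nonneg (n : ℕ) : 0 ≤ (1 + chi n) * Λ n :=
  mul_nonneg (by linarith [(abs_le.1 (abs_chi_le_one n)).1]) vonMangoldt_nonneg

lemma one_add_chi_mul_vonMangoldt_le (n : ℕ) :
    (1 + chi n) * Λ n ≤ 2 * (if n.Prime ∧ n % 4 = 1 then log n else 0) +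
      2 * (if ¬n.Prime then Λ n else 0) + if n = 2 then log 2 else 0 := by
  by_cases hn : n.Prime
  · rw [vonMangoldt_apply_prime hn, if_neg (not_not.2 hn), chi_eq_ite]
    rcases hn.eq_two_or_odd with rfl | hodd
    · norm_num
    · have hn₂ : n ≠ 2 := by omega
      simp only [hn, hodd, hn₂, true_and, one_ne_zero, if_false]
      split_ifs <;> norm_num
  · have hn₂ : n ≠ 2 := fun h ↦ hn (h ▸ Nat.prime_two)
    simp only [hn, hn₂, false_and, not_false_eq_true, if_true, if_false, mul_zero, zero_add,
      add_zero]
    exact mul_le_mul_of_nonneg_right (by linarith [(abs_le.1 (abs_chi_le_one n)).2])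
      vonMangoldt_nonneg

lemma sum_one_add_chi_mul_vonMangoldt_le (x : ℝ) :
    ∑ n ∈ Ioc 0 ⌊x⌋₊, (1 + chi n) * Λ n ≤ 2 * thetaOne x + 2 * (ψ x - θ x) + log 2 := by
  have htwo : ∑ n ∈ Ioc 0 ⌊x⌋₊, (if n = 2 then log 2 else 0) ≤ log 2 := by
    rw [sum_ite_eq']
    split_ifs
    exacts [le_rfl, Real.log_nonneg one_le_two]
  calc ∑ n ∈ Ioc 0 ⌊x⌋₊, (1 + chi n) * Λ n
      ≤ ∑ n ∈ Ioc 0 ⌊x⌋₊, (2 * (if n.Prime ∧ n % 4 = 1 then log n else 0) +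
          2 * (if ¬n.Prime then Λ n else 0) + if n = 2 then log 2 else 0) :=
        sum_le_sum fun n _ ↦ one_add_chi_mul_vonMangoldt_le n
    _ ≤ 2 * thetaOne x + 2 * (ψ x - θ x) + log 2 := by
        rw [sum_add_distrib, sum_add_distrib, ← mul_sum, ← mul_sum, ← sum_filter, ← sum_filter,
          ← Chebyshev.psi_sub_theta_eq_sum_not_prime, ← thetaOne]
        gcongr

/-- `ζ(s)` contributes `log x` and `L(s, χ₄)` only `O(1)` to the logarithmic sum of `(1 + χ₄)Λ`,
so this sum grows by at least `1` on `(x / exp 41, x]`, as `41 = 1 + 2 * 6 + 2 * 14`. -/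
lemma exp_mul_le_sum_one_add_chi_mul_vonMangoldt {x : ℝ} (hx : exp 41 ≤ x) :
    exp (-41) * x ≤ ∑ n ∈ Ioc 0 ⌊x⌋₊, (1 + chi n) * Λ n := by
  let g : ArithmeticFunction ℝ := Λ + chi.pmul Λ
  have hg (n : ℕ) : g n = (1 + chi n) * Λ n := by
    rw [one_add_mul]
    rfl
  have hx₁ : 1 ≤ x / exp 41 := (one_le_div (Real.exp_pos 41)).2 hx
  have hx₁' : 1 ≤ x := (Real.one_le_exp (by norm_num)).trans hx
  have hx₀ : 0 < x := by linarith
  have hlog : log (x / exp 41) = log x - 41 := by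
    rw [Real.log_div hx₀.ne' (Real.exp_ne_zero _), Real.log_exp]
  have hgrowth : 1 ≤ logSum g x - logSum g (x / exp 41) := by
    simp only [g, logSum_add]
    have h₁ := abs_le.1 (abs_logSum_vonMangoldt_sub_log_le hx₁)
    have h₂ := abs_le.1 (abs_logSum_vonMangoldt_sub_log_le hx₁')
    have h₃ := abs_le.1 (abs_logSum_chi_pmul_vonMangoldt_le hx₁)
    have h₄ := abs_le.1 (abs_logSum_chi_pmul_vonMangoldt_le hx₁')
    linarith
  have hdiff := logSum_sub_logSum_div_le (f := g)
    (fun n ↦ (hg n).symm ▸ one_add_chi_mul_vonMangoldt_nonneg n)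
    (Real.one_le_exp (by norm_num : (0 : ℝ) ≤ 41)) hx₀
  simp only [hg] at hdiff
  have := hgrowth.trans hdiff
  rw [Real.exp_neg, inv_mul_le_iff₀ (Real.exp_pos 41)]
  rwa [div_mul_eq_mul_div, one_le_div hx₀] at this

theorem exists_eventually_mul_le_thetaOne :
    ∃ c > 0, ∀ᶠ x in atTop, c * x ≤ thetaOne x := by
  have hc : 0 < exp (-41) / 8 := by positivity
  have hsqrt : (fun x ↦ √x) =o[atTop] fun x : ℝ ↦ x := by
    simpa only [← Real.sqrt_eq_rpow, Real.rpow_one] using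
      isLittleO_rpow_rpow (one_half_lt_one (α := ℝ))
  have hpsi : (ψ - θ) =o[atTop] fun x : ℝ ↦ x :=
    Chebyshev.isBigO_psi_sub_theta_sqrt.trans_isLittleO hsqrt
  refine ⟨exp (-41) / 8, hc, ?_⟩
  filter_upwards [hpsi.def hc, (Asymptotics.isLittleO_const_id_atTop (log 2)).def hc,
    eventually_ge_atTop (exp 41)] with x hψ hlog hx
  have hx₀ : 0 < x := (Real.exp_pos 41).trans_le hx
  have := exp_mul_le_sum_one_add_chi_mul_vonMangoldt hx
  have := sum_one_add_chi_mul_vonMangoldt_le x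
  simp only [Pi.sub_apply, id, Real.norm_eq_abs, abs_of_pos hx₀] at hψ hlog
  have := (le_abs_self _).trans hψ
  have := (le_abs_self _).trans hlog
  linarith [mul_pos (Real.exp_pos (-41)) hx₀]

end PrimesOneModFour

section Indicator

variable {S : Set ℕ}

open Classical in
/-- The indicator function of the positive elements of `S`, as an arithmetic function. -/
noncomputable def indicator (S : Set ℕ) : ArithmeticFunction ℝ :=
  ⟨fun n ↦ if n ≠ 0 ∧ n ∈ S then 1 else 0, by simp⟩

open Classical in
lemma indicator_apply (S : Set ℕ) (n : ℕ) : indicator S n = if n ≠ 0 ∧ n ∈ S then 1 else 0 := rfl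

lemma indicator_of_mem {n : ℕ} (hn₀ : n ≠ 0) (hn : n ∈ S) : indicator S n = 1 := if_pos ⟨hn₀, hn⟩

lemma indicator_of_notMem {n : ℕ} (hn : n ∉ S) : indicator S n = 0 := if_neg fun h ↦ hn h.2

lemma indicator_nonneg (S : Set ℕ) (n : ℕ) : 0 ≤ indicator S n := by
  rw [indicator_apply]
  split_ifs <;> norm_num

lemma indicator_mono {T : Set ℕ} (hST : S ⊆ T) (n : ℕ) : indicator S n ≤ indicator T n := by
  by_cases hn : n ≠ 0 ∧ n ∈ S
  · rw [indicator_of_mem hn.1 hn.2, indicator_of_mem hn.1 (hST hn.2)]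
  · rw [indicator_apply, if_neg hn]
    exact indicator_nonneg T n

lemma indicator_mul {m n : ℕ} (h : m * n ∈ S ↔ m ∈ S ∧ n ∈ S) :
    indicator S (m * n) = indicator S m * indicator S n := by
  by_cases hm : m ≠ 0 ∧ m ∈ S <;> by_cases hn : n ≠ 0 ∧ n ∈ S <;>
    simp only [indicator_apply, h, mul_ne_zero_iff, hm, hn, if_false] <;> grind

lemma isMultiplicative_indicator (h_one : 1 ∈ S)
    (h_mul : ∀ {m n : ℕ}, m.Coprime n → (m * n ∈ S ↔ m ∈ S ∧ n ∈ S)) :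
    (indicator S).IsMultiplicative :=
  ⟨indicator_of_mem one_ne_zero h_one, fun hmn ↦ indicator_mul (h_mul hmn)⟩

lemma sum_indicator (S : Set ℕ) [DecidablePred (· ∈ S)] (N : ℕ) :
    ∑ n ∈ Ioc 0 N, indicator S n = #{n ∈ Ioc 0 N | n ∈ S} := by
  rw [← sum_boole]
  refine sum_congr rfl fun n hn ↦ ?_
  by_cases hnS : n ∈ S
  · rw [indicator_of_mem (mem_Ioc.1 hn).1.ne' hnS, if_pos hnS]
  · rw [indicator_of_notMem hnS, if_neg hnS]

lemma logSum_indicator (S : Set ℕ) [DecidablePred (· ∈ S)] (x : ℝ) :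
    logSum (indicator S) x = ∑ n ∈ Ioc 0 ⌊x⌋₊ with n ∈ S, (n : ℝ)⁻¹ := by
  rw [logSum, sum_filter]
  refine sum_congr rfl fun n hn ↦ ?_
  by_cases hnS : n ∈ S
  · rw [indicator_of_mem (mem_Ioc.1 hn).1.ne' hnS, if_pos hnS, one_div]
  · rw [indicator_of_notMem hnS, if_neg hnS, zero_div]

end Indicator

section Squares

lemma isSquare_left_of_isSquare_mul {m n : ℕ} (hmn : m.Coprime n) (h : IsSquare (m * n)) :
    IsSquare m := by
  obtain ⟨s, hs⟩ := h
  obtain ⟨d, rfl⟩ := exists_eq_pow_of_mul_eq_pow (Nat.isUnit_iff.2 hmn) (hs.trans (sq s).symm)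
  exact ⟨d, sq d⟩

lemma isMultiplicative_indicator_isSquare : (indicator {n | IsSquare n}).IsMultiplicative :=
  isMultiplicative_indicator IsSquare.one fun {m n} hmn ↦
    ⟨fun h ↦ ⟨isSquare_left_of_isSquare_mul hmn h,
      isSquare_left_of_isSquare_mul hmn.symm (mul_comm m n ▸ h)⟩, fun h ↦ h.1.mul h.2⟩

lemma logSum_indicator_isSquare_le (x : ℝ) : logSum (indicator {n | IsSquare n}) x ≤ 2 := by
  classical
  have hsub : {n ∈ Ioc 0 ⌊x⌋₊ | n ∈ {n | IsSquare n}} ⊆ (Ioo 0 (⌊x⌋₊ + 1)).image fun s ↦ s ^ 2 := by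
    rintro _ hn
    obtain ⟨hn, s, rfl⟩ := mem_filter.1 hn
    obtain ⟨hs₀, hsx⟩ := mem_Ioc.1 hn
    refine mem_image.2 ⟨s, mem_Ioo.2 ⟨Nat.pos_of_mul_pos_right hs₀, ?_⟩, sq s⟩
    exact Nat.lt_succ_of_le ((Nat.le_mul_self s).trans hsx)
  rw [logSum_indicator]
  calc ∑ n ∈ Ioc 0 ⌊x⌋₊ with n ∈ {n | IsSquare n}, (n : ℝ)⁻¹
      ≤ ∑ n ∈ (Ioo 0 (⌊x⌋₊ + 1)).image (fun s : ℕ ↦ (s ^ 2 : ℕ)), (n : ℝ)⁻¹ :=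
        sum_le_sum_of_subset_of_nonneg hsub fun n _ _ ↦ by positivity
    _ = ∑ s ∈ Ioo 0 (⌊x⌋₊ + 1), ((s : ℝ) ^ 2)⁻¹ := by
        rw [sum_image (Nat.pow_left_injective two_ne_zero).injOn]
        simp only [Nat.cast_pow]
    _ ≤ 2 := by simpa using sum_Ioo_inv_sq_le (α := ℝ) 0 (⌊x⌋₊ + 1)

end Squares

section DivisorsOfTwo

lemma isMultiplicative_indicator_dvd (N : ℕ) : (indicator {n | n ∣ N}).IsMultiplicative :=
  isMultiplicative_indicator (one_dvd N) fun hmn ↦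
    ⟨fun h ↦ ⟨dvd_of_mul_right_dvd h, dvd_of_mul_left_dvd h⟩,
      fun h ↦ hmn.mul_dvd_of_dvd_of_dvd h.1 h.2⟩

lemma logSum_indicator_dvd_two_le (x : ℝ) : logSum (indicator {n | n ∣ 2}) x ≤ 2 := by
  classical
  rw [logSum_indicator]
  calc ∑ n ∈ Ioc 0 ⌊x⌋₊ with n ∈ {n | n ∣ 2}, (n : ℝ)⁻¹ ≤ ∑ n ∈ ({1, 2} : Finset ℕ), (n : ℝ)⁻¹ := by
        refine sum_le_sum_of_subset_of_nonneg (fun n hn ↦ ?_) fun n _ _ ↦ by positivity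
        have := (Nat.dvd_prime Nat.prime_two).1 (mem_filter.1 hn).2
        simpa only [mem_insert, mem_singleton] using this
    _ ≤ 2 := by norm_num

end DivisorsOfTwo

section LowerBound

lemma inP1_one : InP1 1 := ⟨one_pos, fun _ hp hdvd ↦ absurd (Nat.dvd_one.1 hdvd) hp.ne_one⟩

lemma inP1_mul_iff {m n : ℕ} : InP1 (m * n) ↔ InP1 m ∧ InP1 n := by
  constructor
  · rintro ⟨hpos, hprime⟩
    exact ⟨⟨Nat.pos_of_mul_pos_right hpos, fun p hp hdvd ↦ hprime p hp (hdvd.mul_right n)⟩,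
      ⟨Nat.pos_of_mul_pos_left hpos, fun p hp hdvd ↦ hprime p hp (hdvd.mul_left m)⟩⟩
  · rintro ⟨⟨hm, hpm⟩, hn, hpn⟩
    exact ⟨Nat.mul_pos hm hn, fun p hp hdvd ↦
      (hp.dvd_mul.1 hdvd).elim (hpm p hp) (hpn p hp)⟩

lemma inP1_pow {p : ℕ} (hp : p.Prime) (hp₁ : p % 4 = 1) (k : ℕ) : InP1 (p ^ k) :=
  ⟨pow_pos hp.pos k, fun _ hq hdvd ↦ (Nat.prime_eq_prime_of_dvd_pow hq hp hdvd).symm ▸ hp₁⟩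

lemma isMultiplicative_indicator_inP1 : (indicator {n | InP1 n}).IsMultiplicative :=
  isMultiplicative_indicator inP1_one fun _ ↦ inP1_mul_iff

lemma apply_nonneg_and_le_of_prime_pow {f g : ArithmeticFunction ℝ} (hf : f.IsMultiplicative)
    (hg : g.IsMultiplicative)
    (hfg : ∀ p k : ℕ, p.Prime → 0 ≤ f (p ^ k) ∧ f (p ^ k) ≤ g (p ^ k)) (n : ℕ) :
    0 ≤ f n ∧ f n ≤ g n := by
  induction n using Nat.recOnPosPrimePosCoprime with
  | zero => simp
  | one => simp [hf.map_one, hg.map_one]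
  | prime_pow p k hp _ => exact hfg p k hp
  | coprime a b _ _ hab iha ihb =>
    rw [hf.map_mul_of_coprime hab, hg.map_mul_of_coprime hab]
    exact ⟨mul_nonneg iha.1 ihb.1, mul_le_mul iha.2 ihb.2 ihb.1 (iha.1.trans iha.2)⟩

lemma zeta_mul_chi_apply_prime_pow {p : ℕ} (hp : p.Prime) (k : ℕ) :
    ((ζ : ArithmeticFunction ℝ) * chi) (p ^ k) = ∑ i ∈ range (k + 1), chi p ^ i := by
  rw [coe_zeta_mul_apply, Nat.sum_divisors_prime_pow hp]
  refine sum_congr rfl fun i _ ↦ ?_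
  rw [chi_apply, chi_apply, Nat.cast_pow, map_pow, Int.cast_pow]

lemma zeta_mul_chi_apply_le_of_inP1 {n : ℕ} (hn : InP1 n) :
    ((ζ : ArithmeticFunction ℝ) * chi) n ≤
      (indicator {n | InP1 n} * indicator {n | InP1 n}) n := by
  rw [mul_apply, mul_apply]
  refine sum_le_sum fun ⟨d, e⟩ hde ↦ ?_
  obtain ⟨hd, he⟩ := inP1_mul_iff.1 ((Nat.mem_divisorsAntidiagonal.1 hde).1.symm ▸ hn)
  rw [indicator_of_mem hd.1.ne' hd, indicator_of_mem he.1.ne' he, natCoe_apply,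
    zeta_apply_ne hd.1.ne', Nat.cast_one, one_mul, one_mul]
  exact (abs_le.1 (abs_chi_le_one e)).2

/-- An arithmetic function dominating `ζ * χ₄`: on powers of primes `p ≡ 1 (mod 4)` it is at least
the number of divisors, on powers of `p ≡ 3 (mod 4)` it detects squares, and the last factor takes
care of the odd powers of `2`. -/
noncomputable def majorant : ArithmeticFunction ℝ :=
  indicator {n | InP1 n} * indicator {n | InP1 n} *
    (indicator {n | IsSquare n} * indicator {n | n ∣ 2})

lemma isMultiplicative_majorant : majorant.IsMultiplicative :=
  (isMultiplicative_indicator_inP1.mul isMultiplicative_indicator_inP1).mul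
    (isMultiplicative_indicator_isSquare.mul (isMultiplicative_indicator_dvd 2))

lemma indicator_inP1_mul_self_le_majorant (n : ℕ) :
    (indicator {n | InP1 n} * indicator {n | InP1 n}) n ≤ majorant n := by
  rcases eq_or_ne n 0 with rfl | hn
  · simp
  have := apply_mul_apply_le_mul_apply (m := n) (n := 1)
    (mul_apply_nonneg (indicator_nonneg {n | InP1 n}) (indicator_nonneg {n | InP1 n}))
    (mul_apply_nonneg (indicator_nonneg {n | IsSquare n}) (indicator_nonneg {n | n ∣ 2}))
    (by simpa using hn)
  rwa [(isMultiplicative_indicator_isSquare.mul (isMultiplicative_indicator_dvd 2)).map_one,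
    mul_one, mul_one] at this

lemma one_le_majorant_sq_mul {m d : ℕ} (hm : m ≠ 0) (hd : d ∣ 2) : 1 ≤ majorant (m ^ 2 * d) := by
  have hd₀ : d ≠ 0 := ne_zero_of_dvd_ne_zero two_ne_zero hd
  have hmd : m ^ 2 * d ≠ 0 := mul_ne_zero (pow_ne_zero 2 hm) hd₀
  have hsq := apply_mul_apply_le_mul_apply (indicator_nonneg {n | IsSquare n})
    (indicator_nonneg {n | n ∣ 2}) hmd
  rw [indicator_of_mem (pow_ne_zero 2 hm) (IsSquare.sq m : m ^ 2 ∈ {n | IsSquare n}),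
    indicator_of_mem hd₀ (show d ∈ {n | n ∣ 2} from hd), one_mul] at hsq
  have hmaj := apply_mul_apply_le_mul_apply (m := 1) (n := m ^ 2 * d)
    (mul_apply_nonneg (indicator_nonneg {n | InP1 n}) (indicator_nonneg {n | InP1 n}))
    (mul_apply_nonneg (indicator_nonneg {n | IsSquare n}) (indicator_nonneg {n | n ∣ 2}))
    (by rwa [one_mul])
  rw [(isMultiplicative_indicator_inP1.mul isMultiplicative_indicator_inP1).map_one, one_mul,
    one_mul] at hmaj
  exact hsq.trans hmaj

lemma majorant_nonneg (n : ℕ) : 0 ≤ majorant n :=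
  mul_apply_nonneg
    (mul_apply_nonneg (indicator_nonneg {n | InP1 n}) (indicator_nonneg {n | InP1 n}))
    (mul_apply_nonneg (indicator_nonneg {n | IsSquare n}) (indicator_nonneg {n | n ∣ 2})) n

lemma zeta_mul_chi_apply_prime_pow_le_majorant {p : ℕ} (hp : p.Prime) (k : ℕ) :
    0 ≤ ((ζ : ArithmeticFunction ℝ) * chi) (p ^ k) ∧
      ((ζ : ArithmeticFunction ℝ) * chi) (p ^ k) ≤ majorant (p ^ k) := by
  have hsq (j : ℕ) : p ^ (j + j) = (p ^ j) ^ 2 * 1 := by ring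
  have hmod : p = 2 ∨ p % 4 = 1 ∨ p % 4 = 3 := by
    have := hp.eq_two_or_odd
    omega
  rcases hmod with rfl | hp₁ | hp₃
  · have hchi : ((ζ : ArithmeticFunction ℝ) * chi) (2 ^ k) = 1 := by
      have chi_two : chi 2 = 0 := by norm_num [chi_eq_ite]
      simp [zeta_mul_chi_apply_prime_pow hp, chi_two, zero_pow_eq]
    rw [hchi]
    refine ⟨zero_le_one, ?_⟩
    rcases Nat.even_or_odd' k with ⟨j, rfl | rfl⟩
    · rw [two_mul, hsq]
      exact one_le_majorant_sq_mul (by positivity) (one_dvd 2)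
    · rw [pow_succ, mul_comm 2 j, pow_mul]
      exact one_le_majorant_sq_mul (by positivity) dvd_rfl
  · refine ⟨?_, (zeta_mul_chi_apply_le_of_inP1 (inP1_pow hp hp₁ k)).trans
      (indicator_inP1_mul_self_le_majorant _)⟩
    have chi_p : chi p = 1 := by norm_num [chi_apply, ZMod.χ₄_nat_one_mod_four hp₁]
    rw [zeta_mul_chi_apply_prime_pow hp, chi_p]
    exact sum_nonneg fun i _ ↦ by positivity
  · have chi_p : chi p = -1 := by norm_num [chi_apply, ZMod.χ₄_nat_three_mod_four hp₃]
    rw [zeta_mul_chi_apply_prime_pow hp, chi_p, neg_one_geom_sum]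
    split_ifs with hk
    · exact ⟨le_rfl, majorant_nonneg _⟩
    · obtain ⟨j, rfl⟩ : Even k := by simpa [Nat.even_add_one] using hk
      rw [hsq]
      exact ⟨zero_le_one, one_le_majorant_sq_mul (pow_ne_zero j hp.ne_zero) (one_dvd 2)⟩

lemma zeta_mul_chi_apply_le_majorant (n : ℕ) :
    ((ζ : ArithmeticFunction ℝ) * chi) n ≤ majorant n :=
  (apply_nonneg_and_le_of_prime_pow
    (isMultiplicative_zeta.natCast.mul ⟨chi_one, fun _ ↦ chi_mul _ _⟩) isMultiplicative_majorant
    (fun _ k hp ↦ zeta_mul_chi_apply_prime_pow_le_majorant hp k) n).2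

lemma logSum_majorant_le (x : ℝ) :
    logSum majorant x ≤ 4 * logSum (indicator {n | InP1 n}) x ^ 2 := by
  have hP := indicator_nonneg {n | InP1 n}
  have hsq := indicator_nonneg {n | IsSquare n}
  have hdvd := indicator_nonneg {n | n ∣ 2}
  calc logSum majorant x
      ≤ logSum (indicator {n | InP1 n} * indicator {n | InP1 n}) x *
          logSum (indicator {n | IsSquare n} * indicator {n | n ∣ 2}) x :=
        logSum_mul_le (mul_apply_nonneg hP hP) (mul_apply_nonneg hsq hdvd) x
    _ ≤ (logSum (indicator {n | InP1 n}) x * logSum (indicator {n | InP1 n}) x) * (2 * 2) := by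
        refine mul_le_mul (logSum_mul_le hP hP x) ((logSum_mul_le hsq hdvd x).trans ?_)
          (logSum_nonneg (mul_apply_nonneg hsq hdvd) x) (mul_self_nonneg _)
        exact mul_le_mul (logSum_indicator_isSquare_le x) (logSum_indicator_dvd_two_le x)
          (logSum_nonneg hdvd x) zero_le_two
    _ = 4 * logSum (indicator {n | InP1 n}) x ^ 2 := by ring

lemma log_le_logSum_zeta {x : ℝ} (hx : 0 ≤ x) : log x ≤ logSum (ζ : ArithmeticFunction ℝ) x := by
  refine (log_le_harmonic_floor x hx).trans_eq ?_
  rw [harmonic_eq_sum_Icc, Rat.cast_sum, logSum]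
  refine sum_congr rfl fun n hn ↦ ?_
  rw [natCoe_apply, zeta_apply_ne (mem_Ioc.1 hn).1.ne']
  simp

lemma half_log_le_logSum_zeta_mul_chi {x : ℝ} (hx : 0 ≤ x) :
    log x / 2 ≤ logSum ((ζ : ArithmeticFunction ℝ) * chi) x := by
  calc log x / 2 ≤ logSum (ζ : ArithmeticFunction ℝ) x * (1 / 2) := by
        linarith [log_le_logSum_zeta hx]
    _ ≤ logSum ((ζ : ArithmeticFunction ℝ) * chi) x := by
        rw [logSum_mul, logSum, sum_mul]
        refine sum_le_sum fun d hd ↦ mul_le_mul_of_nonneg_left (half_le_logSum_chi ?_) ?_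
        · obtain ⟨hd₀, hdx⟩ := mem_Ioc.1 hd
          exact (one_le_div₀ (Nat.cast_pos.2 hd₀)).2 ((Nat.le_floor_iff hx).1 hdx)
        · rw [natCoe_apply]
          positivity

theorem sqrt_log_div_eight_le_logSum_indicator_inP1 {x : ℝ} (hx : 0 ≤ x) :
    √(log x / 8) ≤ logSum (indicator {n | InP1 n}) x := by
  refine Real.sqrt_le_iff.2 ⟨logSum_nonneg (indicator_nonneg _) x, ?_⟩
  linarith [half_log_le_logSum_zeta_mul_chi hx, logSum_majorant_le x,
    logSum_le_logSum zeta_mul_chi_apply_le_majorant x]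

end LowerBound

section Sieve

variable {S : Set ℕ}

lemma logSum_indicator_singleton_le (p : ℕ) (x : ℝ) :
    logSum (indicator {p}) x ≤ 1 / (p : ℝ) := by
  classical
  rw [logSum_indicator, one_div]
  refine (sum_le_sum_of_subset_of_nonneg (t := {p}) (fun n hn ↦ ?_) fun n _ _ ↦ ?_).trans_eq
    (sum_singleton _ _)
  · exact mem_singleton.2 (mem_filter.1 hn).2
  · positivity

lemma one_sub_one_div_mul_logSum_indicator_le (hS : ∀ {m n : ℕ}, m ∣ n → n ∈ S → m ∈ S)
    (p : ℕ) (x : ℝ) :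
    (1 - 1 / (p : ℝ)) * logSum (indicator S) x ≤ logSum (indicator {n ∈ S | ¬ p ∣ n}) x := by
  have hmul_nonneg := mul_apply_nonneg (indicator_nonneg {p}) (indicator_nonneg S)
  have hle (n : ℕ) :
      indicator S n ≤ (indicator {n ∈ S | ¬ p ∣ n} + indicator {p} * indicator S) n := by
    rw [ArithmeticFunction.add_apply]
    by_cases hn : n ≠ 0 ∧ n ∈ S
    · rw [indicator_of_mem hn.1 hn.2]
      by_cases hpn : p ∣ n
      · obtain ⟨m, rfl⟩ := hpn
        have hpm := apply_mul_apply_le_mul_apply (indicator_nonneg {p}) (indicator_nonneg S) hn.1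
        rw [indicator_of_mem (left_ne_zero_of_mul hn.1) (Set.mem_singleton p),
          indicator_of_mem (right_ne_zero_of_mul hn.1) (hS (dvd_mul_left m p) hn.2),
          one_mul] at hpm
        exact hpm.trans (le_add_of_nonneg_left (indicator_nonneg _ _))
      · rw [indicator_of_mem hn.1 (⟨hn.2, hpn⟩ : n ∈ {n ∈ S | ¬ p ∣ n})]
        exact le_add_of_nonneg_right (hmul_nonneg n)
    · rw [indicator_apply S, if_neg hn]
      exact add_nonneg (indicator_nonneg _ n) (hmul_nonneg n)
  have hsum := logSum_le_logSum hle x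
  rw [logSum_add] at hsum
  have hmul := (logSum_mul_le (indicator_nonneg {p}) (indicator_nonneg S) x).trans
    (mul_le_mul_of_nonneg_right (logSum_indicator_singleton_le p x)
      (logSum_nonneg (indicator_nonneg S) x))
  linarith

lemma one_sub_one_div_natCast_nonneg (p : ℕ) : (0 : ℝ) ≤ 1 - 1 / p :=
  sub_nonneg.2 (one_div (p : ℝ) ▸ Nat.cast_inv_le_one p)

lemma prod_one_sub_one_div_mul_logSum_indicator_le (hS : ∀ {m n : ℕ}, m ∣ n → n ∈ S → m ∈ S)
    (P : Finset ℕ) (x : ℝ) :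
    (∏ p ∈ P, (1 - 1 / (p : ℝ))) * logSum (indicator S) x ≤
      logSum (indicator {n ∈ S | ∀ p ∈ P, ¬ p ∣ n}) x := by
  induction P using Finset.induction_on with
  | empty => simp
  | insert p P hp ih =>
    have hset : {n ∈ S | ∀ q ∈ insert p P, ¬ q ∣ n} =
        {n ∈ {n ∈ S | ∀ q ∈ P, ¬ q ∣ n} | ¬ p ∣ n} := by
      ext n
      simp [and_assoc, and_comm]
    rw [prod_insert hp, mul_assoc, hset]
    refine (mul_le_mul_of_nonneg_left ih (one_sub_one_div_natCast_nonneg p)).trans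
      (one_sub_one_div_mul_logSum_indicator_le (fun hmn hn ↦ ?_) p x)
    exact ⟨hS hmn hn.1, fun q hq hqm ↦ hn.2 q hq (hqm.trans hmn)⟩

end Sieve

section Coprime

/-- The elements of `⟨P1⟩` coprime to `a`. -/
def P1Coprime (a : ℕ) : Set ℕ := {n | InP1 n ∧ n.Coprime a}

lemma mul_mem_P1Coprime_iff {a m n : ℕ} :
    m * n ∈ P1Coprime a ↔ m ∈ P1Coprime a ∧ n ∈ P1Coprime a :=
  (and_congr inP1_mul_iff Nat.coprime_mul_iff_left).trans and_and_and_comm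

lemma mem_P1Coprime_of_forall_not_dvd {a n : ℕ} (ha : a ≠ 0) (hn : InP1 n)
    (hna : ∀ p ∈ a.primeFactors.filter (· % 4 = 1), ¬ p ∣ n) : n ∈ P1Coprime a :=
  ⟨hn, Nat.coprime_of_dvd fun p hp hpn hpa ↦ hna p
    (mem_filter.2 ⟨Nat.mem_primeFactors.2 ⟨hp, hpa, ha⟩, hn.2 p hp hpn⟩) hpn⟩

lemma prod_mul_logSum_indicator_inP1_le {a : ℕ} (ha : a ≠ 0) (x : ℝ) :
    (∏ p ∈ a.primeFactors with p % 4 = 1, (1 - 1 / (p : ℝ))) *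
        logSum (indicator {n | InP1 n}) x ≤ logSum (indicator (P1Coprime a)) x := by
  refine (prod_one_sub_one_div_mul_logSum_indicator_le (S := {n | InP1 n}) ?_ _ x).trans
    (logSum_le_logSum (fun n ↦ ?_) x)
  · rintro m _ ⟨k, rfl⟩ hmk
    exact (inP1_mul_iff.1 hmk).1
  · refine indicator_mono (fun k hk ↦ ?_) n
    exact mem_P1Coprime_of_forall_not_dvd ha hk.1 hk.2

lemma mem_P1Coprime_of_prime {a p : ℕ} (hp : p.Prime) (hp₁ : p % 4 = 1) (hpa : ¬ p ∣ a) :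
    p ∈ P1Coprime a :=
  ⟨pow_one p ▸ inP1_pow hp hp₁ 1, hp.coprime_iff_not_dvd.2 hpa⟩

lemma thetaOne_sub_log_le {a : ℕ} (ha : a ≠ 0) (x : ℝ) :
    thetaOne x - log a ≤ ∑ d ∈ Ioc 0 ⌊x⌋₊, indicator (P1Coprime a) d * Λ d := by
  have hdiv : ∑ d ∈ Ioc 0 ⌊x⌋₊ with d ∣ a, Λ d ≤ log a := by
    rw [← vonMangoldt_sum]
    exact sum_le_sum_of_subset_of_nonneg
      (fun d hd ↦ Nat.mem_divisors.2 ⟨(mem_filter.1 hd).2, ha⟩) fun _ _ _ ↦ vonMangoldt_nonneg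
  suffices thetaOne x ≤ ∑ d ∈ Ioc 0 ⌊x⌋₊, indicator (P1Coprime a) d * Λ d +
      ∑ d ∈ Ioc 0 ⌊x⌋₊ with d ∣ a, Λ d by linarith
  rw [thetaOne, sum_filter, sum_filter, ← sum_add_distrib]
  refine sum_le_sum fun d _ ↦ ?_
  have hnonneg := mul_nonneg (indicator_nonneg (P1Coprime a) d) (vonMangoldt_nonneg (n := d))
  by_cases hd : d.Prime ∧ d % 4 = 1
  · rw [if_pos hd, ← vonMangoldt_apply_prime hd.1]
    by_cases hda : d ∣ a
    · rw [if_pos hda]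
      exact le_add_of_nonneg_left hnonneg
    · rw [if_neg hda, add_zero,
        indicator_of_mem hd.1.ne_zero (mem_P1Coprime_of_prime hd.1 hd.2 hda), one_mul]
  · rw [if_neg hd]
    exact add_nonneg hnonneg (by split_ifs <;> simp)

end Coprime

section Counting

lemma mul_logSum_le_sum_mul_log {f : ArithmeticFunction ℝ} (hf : ∀ n, 0 ≤ f n)
    (hf_mul : ∀ m n, f (m * n) = f m * f n) {c s x : ℝ} (hs : 0 < s) (hsx : s ≤ x)
    (hc : ∀ y, x / s ≤ y → c * y ≤ ∑ d ∈ Ioc 0 ⌊y⌋₊, f d * Λ d) :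
    c * x * logSum f s ≤ (∑ n ∈ Ioc 0 ⌊x⌋₊, f n) * log x := by
  calc c * x * logSum f s
      = ∑ e ∈ Ioc 0 ⌊s⌋₊, f e * (c * (x / e)) := by
        rw [logSum, mul_sum]
        exact sum_congr rfl fun e _ ↦ by ring
    _ ≤ ∑ e ∈ Ioc 0 ⌊s⌋₊, f e * ∑ d ∈ Ioc 0 ⌊x / e⌋₊, f d * Λ d := by
        refine sum_le_sum fun e he ↦ mul_le_mul_of_nonneg_left (hc _ ?_) (hf e)
        obtain ⟨he₀, hes⟩ := mem_Ioc.1 he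
        exact div_le_div_of_nonneg_left (hs.le.trans hsx) (Nat.cast_pos.2 he₀)
          ((Nat.le_floor_iff hs.le).1 hes)
    _ ≤ ∑ e ∈ Ioc 0 ⌊x⌋₊, f e * ∑ d ∈ Ioc 0 ⌊x / e⌋₊, f d * Λ d :=
        sum_le_sum_of_subset_of_nonneg (Ioc_subset_Ioc_right (Nat.floor_mono hsx)) fun e _ _ ↦
          mul_nonneg (hf e) (sum_nonneg fun d _ ↦ mul_nonneg (hf d) vonMangoldt_nonneg)
    _ = ∑ n ∈ Ioc 0 ⌊x⌋₊, f n * log n := by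
        have := sum_Ioc_floor_mul f (f.pmul Λ) x
        rw [mul_comm, ← pmul_log_of_map_mul hf_mul] at this
        simpa only [pmul_apply, log_apply] using this.symm
    _ ≤ (∑ n ∈ Ioc 0 ⌊x⌋₊, f n) * log x := by
        rw [sum_mul]
        refine sum_le_sum fun n hn ↦ mul_le_mul_of_nonneg_left ?_ (hf n)
        obtain ⟨hn₀, hnx⟩ := mem_Ioc.1 hn
        exact Real.log_le_log (Nat.cast_pos.2 hn₀)
          ((Nat.le_floor_iff (hs.le.trans hsx)).1 hnx)

lemma sum_indicator_le_ncard {S : Set ℕ} {x t : ℝ} (hx : 0 ≤ x) (hxt : x < t) :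
    ∑ n ∈ Ioc 0 ⌊x⌋₊, indicator S n ≤ ({m : ℕ | (m : ℝ) < t ∧ m ∈ S}.ncard : ℝ) := by
  classical
  rw [sum_indicator, Nat.cast_le, ← Set.ncard_coe_finset]
  refine Set.ncard_le_ncard (fun n hn ↦ ?_)
    ((Set.finite_lt_nat ⌈t⌉₊).subset fun n hn ↦ Nat.lt_ceil.2 hn.1)
  obtain ⟨hnx, hnS⟩ := mem_filter.1 (mem_coe.1 hn)
  exact ⟨((Nat.le_floor_iff hx).1 (mem_Ioc.1 hnx).2).trans_lt hxt, hnS⟩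

end Counting

section Parameters

lemma mul_prod_mul_sqrt_le_ncard_mul_log {a : ℕ} (ha : a ≠ 0) {c s x t : ℝ} (hc : 0 ≤ c)
    (hs : 1 ≤ s) (hsx : s ≤ x) (hxt : x < t) (hθ : ∀ y, x / s ≤ y → 2 * c * y ≤ thetaOne y)
    (hac : log a ≤ c * (x / s)) :
    c * x * ((∏ p ∈ a.primeFactors with p % 4 = 1, (1 - 1 / (p : ℝ))) * √(log s / 8)) ≤
      ({m : ℕ | (m : ℝ) < t ∧ InP1 m ∧ m.Coprime a}.ncard : ℝ) * log t := by
  have hs₀ : 0 < s := one_pos.trans_le hs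
  have hx₀ : 0 < x := hs₀.trans_le hsx
  have hθa (y : ℝ) (hy : x / s ≤ y) :
      c * y ≤ ∑ d ∈ Ioc 0 ⌊y⌋₊, indicator (P1Coprime a) d * Λ d := by
    linarith [thetaOne_sub_log_le ha y, hθ y hy, mul_le_mul_of_nonneg_left hy hc]
  calc c * x * ((∏ p ∈ a.primeFactors with p % 4 = 1, (1 - 1 / (p : ℝ))) * √(log s / 8))
      ≤ c * x * logSum (indicator (P1Coprime a)) s := by
        refine mul_le_mul_of_nonneg_left ?_ (mul_nonneg hc hx₀.le)
        exact (mul_le_mul_of_nonneg_left (sqrt_log_div_eight_le_logSum_indicator_inP1 hs₀.le)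
          (prod_nonneg fun p _ ↦ one_sub_one_div_natCast_nonneg p)).trans
          (prod_mul_logSum_indicator_inP1_le ha s)
    _ ≤ (∑ n ∈ Ioc 0 ⌊x⌋₊, indicator (P1Coprime a) n) * log x :=
        mul_logSum_le_sum_mul_log (indicator_nonneg (P1Coprime a))
          (fun _ _ ↦ indicator_mul mul_mem_P1Coprime_iff) hs₀ hsx hθa
    _ ≤ ({m : ℕ | (m : ℝ) < t ∧ InP1 m ∧ m.Coprime a}.ncard : ℝ) * log t :=
        mul_le_mul (sum_indicator_le_ncard hx₀.le hxt) (Real.log_le_log hx₀ hxt.le)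
          (Real.log_nonneg (hs.trans hsx)) (Nat.cast_nonneg _)

lemma mul_rpow_neg_half_le {A B L : ℝ} (hL : 0 < L) (h : A * √L ≤ B * L) :
    A * L ^ (-(1 : ℝ) / 2) ≤ B := by
  rw [neg_div, Real.rpow_neg hL.le, ← Real.sqrt_eq_rpow, ← div_eq_mul_inv,
    div_le_iff₀ (Real.sqrt_pos.2 hL)]
  refine le_of_mul_le_mul_right ?_ (Real.sqrt_pos.2 hL)
  rwa [mul_assoc, Real.mul_self_sqrt hL.le]

lemma div_two_div_rpow {t : ℝ} (ht : 0 < t) (r : ℝ) : t / 2 / t ^ r = t ^ (1 - r) / 2 := by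
  rw [Real.rpow_sub ht, Real.rpow_one]
  ring

end Parameters

end P1Integers

open P1Integers in
theorem count_of_P1_integers_coprime_to_a_general {δ : ℝ} (hδ : δ < 1) :
    ∃ c > 0, ∀ᶠ t : ℝ in atTop, ∀ a : ℕ, 0 < a → (a : ℝ) ≤ exp (t ^ δ) →
      c * t * log t ^ (-(1 : ℝ) / 2) *
          ∏ p ∈ a.primeFactors with p % 4 = 1, (1 - 1 / (p : ℝ)) ≤
        ({m : ℕ | (m : ℝ) < t ∧ InP1 m ∧ m.Coprime a}.ncard : ℝ) := by
  obtain ⟨c, hc, hθ⟩ := exists_eventually_mul_le_thetaOne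
  obtain ⟨β, hβ₀, hβ⟩ := exists_between (lt_min zero_lt_one (sub_pos.2 hδ))
  obtain ⟨hβ₁, hβδ⟩ := lt_min_iff.1 hβ
  refine ⟨c / 4 * √(β / 8), by positivity, ?_⟩
  have hlim : Tendsto (fun t : ℝ ↦ t ^ (1 - β) / 2) atTop atTop :=
    (tendsto_rpow_atTop (sub_pos.2 hβ₁)).atTop_div_const two_pos
  filter_upwards [eventually_gt_atTop 1, hlim.eventually (eventually_forall_ge_atTop.2 hθ),
    eventually_rpow_le_mul_rpow hβ₁ one_half_pos,
    eventually_rpow_le_mul_rpow (lt_sub_comm.1 hβδ) (show 0 < c / 4 by positivity)]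
    with t ht hθt hst hδt a ha hat
  have ht₀ : 0 < t := one_pos.trans ht
  have hlog : 0 < log t := Real.log_pos ht
  set Q := ∏ p ∈ a.primeFactors with p % 4 = 1, (1 - 1 / (p : ℝ))
  set A := ({m : ℕ | (m : ℝ) < t ∧ InP1 m ∧ m.Coprime a}.ncard : ℝ)
  suffices c / 4 * √(β / 8) * t * Q * √(log t) ≤ A * log t from
    (mul_right_comm _ _ _).trans_le (mul_rpow_neg_half_le hlog this)
  have hloga : log a ≤ t ^ δ := (Real.log_le_iff_le_exp (Nat.cast_pos.2 ha)).2 hat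
  calc c / 4 * √(β / 8) * t * Q * √(log t)
      = c / 2 * (t / 2) * (Q * √(log (t ^ β) / 8)) := by
        rw [Real.log_rpow ht₀, mul_div_right_comm, Real.sqrt_mul (by positivity)]
        ring
    _ ≤ A * log t := by
        refine mul_prod_mul_sqrt_le_ncard_mul_log ha.ne' (by positivity)
          (Real.one_le_rpow ht.le hβ₀.le) ?_ (half_lt_self ht₀) (fun y hy ↦ ?_) ?_
        · rw [Real.rpow_one] at hst
          linarith
        · rw [mul_div_cancel₀ c two_ne_zero]
          exact hθt y (div_two_div_rpow ht₀ β ▸ hy)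
        · rw [div_two_div_rpow ht₀]
          linarith

theorem count_of_P1_integers_coprime_to_a :
    ∀ C : ℝ, 0 < C → ∃ c : ℝ, 0 < c ∧ ∃ t0 : ℝ, ∀ t : ℝ, t0 ≤ t →
      ∀ a : ℕ, 0 < a → (a : ℝ) ≤ Real.log t ^ C →
        c * t * Real.log t ^ (-(1 : ℝ) / 2) *
            ∏ p ∈ a.primeFactors.filter (fun p => p % 4 = 1), (1 - 1 / (p : ℝ)) ≤
          (({m : ℕ | (m : ℝ) < t ∧ InP1 m ∧ Nat.Coprime m a}).ncard : ℝ) := by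
  intro C _
  obtain ⟨c, hc, hcount⟩ := count_of_P1_integers_coprime_to_a_general one_half_lt_one
  refine ⟨c, hc, eventually_atTop.1 ?_⟩
  filter_upwards [hcount, P1Integers.eventually_log_rpow_le_exp_rpow C one_half_pos]
    with t ht hlog a ha hat
  exact ht a ha (hat.trans hlog)
end
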